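/- Fix an integer k ≥ 4. Then as x → ∞, the number of integers n with 1 ≤ n ≤ x such that there exists a prime p with p^k > (log log x)^{0.9} and p^k ∣ s(n) is o(x). (That is, almost always s(n) is not divisible by p^k for any prime p with p^k > (log log x)^{0.9}.) -/

import Mathlib

open scoped Classical
open Filter Finset

/-- `sigma1 n` is `σ(n)`, the sum of all positive divisors of `n`. -/
def sigma1 (n : ℕ) : ℕ := ArithmeticFunction.sigma 1 n

/-- `s n` is the sum of the proper divisors of `n`, i.e. `σ(n) − n`. -/
def s (n : ℕ) : ℕ := sigma1 n - n


theorem logfac_lower (n : ℕ) : (n : ℝ) * Real.log n - n ≤ Real.log (n.factorial) := by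
  induction n with
  | zero => simp
  | succ n ih =>
    rw [Nat.factorial_succ]
    push_cast
    rw [Real.log_mul (by positivity) (by positivity)]
    rcases Nat.eq_zero_or_pos n with h | h
    · subst h; simp
    have hn : (0:ℝ) < n := by exact_mod_cast h
    have h1 : Real.log ((n:ℝ)+1) - Real.log n ≤ 1 / n := by
      rw [← Real.log_div (by positivity) (by positivity)]
      have := Real.log_le_sub_one_of_pos (x := ((n:ℝ)+1)/n) (by positivity)
      have e : ((n:ℝ)+1)/n - 1 = 1/n := by field_simp; ring
      linarith
    have h2 : (n:ℝ) * (Real.log ((n:ℝ)+1) - Real.log n) ≤ 1 := by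
      calc _ ≤ (n:ℝ) * (1/n) := by gcongr
        _ = 1 := by field_simp
    nlinarith

theorem logfac_upper (n : ℕ) : Real.log (n.factorial) ≤ (n : ℝ) * Real.log n := by
  have h := Nat.factorial_le_pow n
  have : Real.log (n.factorial) ≤ Real.log ((n:ℝ)^n) := by
    apply Real.log_le_log (by positivity)
    exact_mod_cast h
  simpa using this

theorem logfac_eq (n : ℕ) : Real.log (n.factorial) =
    ∑ p ∈ (Finset.Icc 1 n).filter Nat.Prime, ((n.factorial).factorization p : ℝ) * Real.log p := by
  have h := Nat.prod_factorization_pow_eq_self (Nat.factorial_ne_zero n)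
  conv_lhs => rw [← h]
  rw [Finsupp.prod]
  push_cast
  rw [Real.log_prod (by
    intro p hp
    have : p.Prime := Nat.prime_of_mem_primeFactors (by simpa using hp)
    have := this.pos
    positivity)]
  have : (n.factorial).factorization.support = (Finset.Icc 1 n).filter Nat.Prime := by
    ext p
    simp only [Nat.support_factorization, Nat.mem_primeFactors, Finset.mem_filter, Finset.mem_Icc]
    constructor
    · rintro ⟨hp, hd, _⟩
      exact ⟨⟨hp.pos, (hp.dvd_factorial).1 hd⟩, hp⟩
    · rintro ⟨⟨_, h⟩, hp⟩
      exact ⟨hp, (hp.dvd_factorial).2 h, Nat.factorial_ne_zero n⟩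
  rw [this]
  apply Finset.sum_congr rfl
  intro p _
  rw [Real.log_pow]

/-- Mertens sum -/
noncomputable def mer (n : ℕ) : ℝ := ∑ p ∈ (Finset.Icc 1 n).filter Nat.Prime, Real.log p / p

theorem val_lower (n p : ℕ) (hp : p.Prime) : (n:ℝ)/p - 1 ≤ ((n.factorial).factorization p : ℝ) := by
  have h1 : n / p ≤ (n.factorial).factorization p := by
    rw [Nat.factorization_factorial hp (b := Nat.log p n + 2) (by omega)]
    have : n / p = n / p ^ 1 := by simp
    rw [this]
    exact Finset.single_le_sum (f := fun i => n / p ^ i) (fun _ _ => Nat.zero_le _)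
      (Finset.mem_Ico.2 ⟨le_rfl, by omega⟩)
  have h2 := Nat.lt_floor_add_one ((n:ℝ)/p)
  rw [Nat.floor_div_eq_div] at h2
  have : ((n/p:ℕ):ℝ) ≤ ((n.factorial).factorization p : ℝ) := by exact_mod_cast h1
  linarith

theorem val_upper (n p : ℕ) (hp : p.Prime) : ((n.factorial).factorization p : ℝ) ≤ (n:ℝ)/((p:ℝ)-1) := by
  have h1 := Nat.factorization_factorial_le_div_pred hp n
  have h2 : ((n / (p-1) : ℕ) : ℝ) ≤ (n:ℝ)/((p-1 : ℕ):ℝ) := Nat.cast_div_le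
  have h3 : ((p-1:ℕ):ℝ) = (p:ℝ)-1 := by
    rw [Nat.cast_sub hp.one_le]; simp
  rw [h3] at h2
  exact le_trans (by exact_mod_cast h1) h2

theorem theta_eq' (n : ℕ) : Chebyshev.theta n = ∑ p ∈ (Finset.Icc 1 n).filter Nat.Prime, Real.log p := by
  rw [Chebyshev.theta]
  simp only [Nat.floor_natCast]
  rfl

theorem mer_upper (n : ℕ) (hn : 1 ≤ n) : mer n ≤ Real.log n + Real.log 4 := by
  have hn' : (0:ℝ) < n := by exact_mod_cast hn
  have h1 := logfac_upper n
  rw [logfac_eq] at h1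
  have h2 : ∑ p ∈ (Finset.Icc 1 n).filter Nat.Prime, ((n:ℝ)/p - 1) * Real.log p ≤
      ∑ p ∈ (Finset.Icc 1 n).filter Nat.Prime, ((n.factorial).factorization p : ℝ) * Real.log p := by
    apply Finset.sum_le_sum
    intro p hp
    have hp' : p.Prime := (Finset.mem_filter.1 hp).2
    exact mul_le_mul_of_nonneg_right (val_lower n p hp') (Real.log_natCast_nonneg p)
  have h3 : ∑ p ∈ (Finset.Icc 1 n).filter Nat.Prime, ((n:ℝ)/p - 1) * Real.log p =
      n * mer n - Chebyshev.theta n := by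
    rw [theta_eq', mer, Finset.mul_sum, ← Finset.sum_sub_distrib]
    apply Finset.sum_congr rfl
    intro p _
    ring
  have h4 := Chebyshev.theta_le_log4_mul_x (x := n) hn'.le
  have h5 : (n:ℝ) * mer n ≤ n * (Real.log n + Real.log 4) := by linarith
  exact le_of_mul_le_mul_left h5 hn'

theorem aux_summable : ∃ C : ℝ, 0 ≤ C ∧ ∀ S : Finset ℕ, (∀ p ∈ S, 2 ≤ p) →
    ∑ p ∈ S, Real.log p / ((p:ℝ) * ((p:ℝ)-1)) ≤ C := by
  have hs : Summable (fun n : ℕ => 4 * (1 / (n:ℝ) ^ (3/2:ℝ))) :=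
    (Real.summable_one_div_nat_rpow.2 (by norm_num)).mul_left 4
  refine ⟨∑' n : ℕ, 4 * (1 / (n:ℝ) ^ (3/2:ℝ)), tsum_nonneg (fun n => by positivity), ?_⟩
  intro S hS
  refine le_trans (Finset.sum_le_sum ?_) (hs.sum_le_tsum S (fun n _ => by positivity))
  intro p hp
  have h2 : (2:ℝ) ≤ p := by exact_mod_cast hS p hp
  have hp0 : (0:ℝ) < p := by linarith
  have h3 : Real.log p ≤ (p:ℝ)^(1/2:ℝ) / (1/2) := Real.log_le_rpow_div hp0.le (by norm_num)
  have h4 : (p:ℝ)^(1/2:ℝ) * (p:ℝ)^(3/2:ℝ) = p * p := by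
    rw [← Real.rpow_add hp0]; norm_num; ring
  have h5 : (0:ℝ) < (p:ℝ)^(3/2:ℝ) := by positivity
  have h6 : (0:ℝ) < (p:ℝ)^(1/2:ℝ) := by positivity
  rw [mul_one_div, div_le_div_iff₀ (by nlinarith) h5]
  calc Real.log p * (p:ℝ)^(3/2:ℝ) ≤ ((p:ℝ)^(1/2:ℝ) / (1/2)) * (p:ℝ)^(3/2:ℝ) := by gcongr
    _ = 2 * (p * p) := by rw [← h4]; ring
    _ ≤ 4 * (p * (p-1)) := by nlinarith

theorem mer_lower : ∃ C : ℝ, 0 ≤ C ∧ ∀ n : ℕ, 1 ≤ n → Real.log n - C ≤ mer n := by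
  obtain ⟨C, hC0, hC⟩ := aux_summable
  refine ⟨C + 1, by linarith, ?_⟩
  intro n hn
  have hn' : (0:ℝ) < n := by exact_mod_cast hn
  have h1 := logfac_lower n
  rw [logfac_eq] at h1
  have h2 : ∑ p ∈ (Finset.Icc 1 n).filter Nat.Prime, ((n.factorial).factorization p : ℝ) * Real.log p ≤
      ∑ p ∈ (Finset.Icc 1 n).filter Nat.Prime, (n:ℝ)/((p:ℝ)-1) * Real.log p := by
    apply Finset.sum_le_sum
    intro p hp
    have hp' : p.Prime := (Finset.mem_filter.1 hp).2
    exact mul_le_mul_of_nonneg_right (val_upper n p hp') (Real.log_natCast_nonneg p)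
  have h3 : ∑ p ∈ (Finset.Icc 1 n).filter Nat.Prime, (n:ℝ)/((p:ℝ)-1) * Real.log p =
      n * (mer n + ∑ p ∈ (Finset.Icc 1 n).filter Nat.Prime, Real.log p / ((p:ℝ) * ((p:ℝ)-1))) := by
    rw [mer, ← Finset.sum_add_distrib, Finset.mul_sum]
    apply Finset.sum_congr rfl
    intro p hp
    have hp' : p.Prime := (Finset.mem_filter.1 hp).2
    have h2 : (2:ℝ) ≤ p := by exact_mod_cast hp'.two_le
    have : (p:ℝ) - 1 ≠ 0 := by intro h; linarith
    have : (p:ℝ) ≠ 0 := by intro h; linarith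
    field_simp
    ring
  have h4 := hC ((Finset.Icc 1 n).filter Nat.Prime) (fun p hp => (Finset.mem_filter.1 hp).2.two_le)
  have h5 : (n:ℝ) * (Real.log n - (C+1)) ≤ n * mer n := by
    rw [h3] at h2
    have : (n:ℝ) * (mer n + ∑ p ∈ (Finset.Icc 1 n).filter Nat.Prime, Real.log p / ((p:ℝ) * ((p:ℝ)-1)))
      ≤ n * (mer n + C) := by gcongr
    linarith
  exact le_of_mul_le_mul_left h5 hn'

/-- primes in (a,b] -/
noncomputable def prI (a b : ℕ) : Finset ℕ := (Finset.Ioc a b).filter Nat.Prime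

/-- sum of reciprocals of primes in (a,b] -/
noncomputable def recI (a b : ℕ) : ℝ := ∑ p ∈ prI a b, 1 / (p:ℝ)

theorem mem_prI {a b p : ℕ} : p ∈ prI a b ↔ (a < p ∧ p ≤ b) ∧ p.Prime := by
  simp [prI]

theorem mer_sub (a b : ℕ) (hab : a ≤ b) : mer b - mer a = ∑ p ∈ prI a b, Real.log p / p := by
  have : (Finset.Icc 1 b).filter Nat.Prime = (Finset.Icc 1 a).filter Nat.Prime ∪ prI a b := by
    ext p
    simp only [prI, Finset.mem_filter, Finset.mem_union, Finset.mem_Icc, Finset.mem_Ioc]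
    constructor
    · rintro ⟨⟨h1, h2⟩, h3⟩
      by_cases h : p ≤ a
      · left; exact ⟨⟨h1, h⟩, h3⟩
      · right; exact ⟨⟨by omega, h2⟩, h3⟩
    · rintro (⟨⟨h1, h2⟩, h3⟩ | ⟨⟨h1, h2⟩, h3⟩)
      · exact ⟨⟨h1, by omega⟩, h3⟩
      · exact ⟨⟨by omega, h2⟩, h3⟩
  rw [mer, mer, this, Finset.sum_union]
  · ring
  · rw [Finset.disjoint_left]
    intro p hp hq
    simp only [prI, Finset.mem_filter, Finset.mem_Icc, Finset.mem_Ioc] at hp hq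
    omega

theorem mertens : ∃ C : ℝ, 0 ≤ C ∧ ∀ a b : ℕ, 2 ≤ a → a ≤ b →
    recI a b ≤ (Real.log b - Real.log a + C) / Real.log a ∧
    (Real.log b - Real.log a - C) / Real.log b ≤ recI a b := by
  obtain ⟨C, hC0, hC⟩ := mer_lower
  refine ⟨C + Real.log 4, by have := Real.log_nonneg (x := 4) (by norm_num); linarith, ?_⟩
  intro a b ha hab
  have ha' : (2:ℝ) ≤ a := by exact_mod_cast ha
  have hab' : (a:ℝ) ≤ b := by exact_mod_cast hab
  have hla : 0 < Real.log a := Real.log_pos (by linarith)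
  have hlb : 0 < Real.log b := Real.log_pos (by linarith)
  have h1 := mer_sub a b hab
  have u1 := mer_upper a (by omega)
  have u2 := mer_upper b (by omega)
  have l1 := hC a (by omega)
  have l2 := hC b (by omega)
  constructor
  · rw [le_div_iff₀ hla, recI, Finset.sum_mul]
    have : ∑ p ∈ prI a b, 1 / (p:ℝ) * Real.log a ≤ ∑ p ∈ prI a b, Real.log p / p := by
      apply Finset.sum_le_sum
      intro p hp
      rw [mem_prI] at hp
      have h : (a:ℝ) ≤ p := by exact_mod_cast hp.1.1.le
      have : Real.log a ≤ Real.log p := Real.log_le_log (by linarith) h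
      rw [one_div_mul_eq_div]
      gcongr
    linarith
  · rw [div_le_iff₀ hlb, recI, Finset.sum_mul]
    have : ∑ p ∈ prI a b, Real.log p / p ≤ ∑ p ∈ prI a b, 1 / (p:ℝ) * Real.log b := by
      apply Finset.sum_le_sum
      intro p hp
      rw [mem_prI] at hp
      have h : (p:ℝ) ≤ b := by exact_mod_cast hp.1.2
      have : Real.log p ≤ Real.log b := Real.log_le_log (by exact_mod_cast hp.2.pos) h
      rw [one_div_mul_eq_div]
      gcongr
    linarith

theorem recI_add (a b c : ℕ) (hab : a ≤ b) (hbc : b ≤ c) : recI a c = recI a b + recI b c := by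
  have : prI a c = prI a b ∪ prI b c := by
    ext p
    simp only [mem_prI, Finset.mem_union]
    constructor
    · rintro ⟨⟨h1, h2⟩, h3⟩
      by_cases h : p ≤ b
      · left; exact ⟨⟨h1, h⟩, h3⟩
      · right; exact ⟨⟨by omega, h2⟩, h3⟩
    · rintro (⟨⟨h1, h2⟩, h3⟩ | ⟨⟨h1, h2⟩, h3⟩)
      · exact ⟨⟨h1, by omega⟩, h3⟩
      · exact ⟨⟨by omega, h2⟩, h3⟩
  rw [recI, recI, recI, this, Finset.sum_union]
  rw [Finset.disjoint_left]
  intro p hp hq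
  rw [mem_prI] at hp hq
  omega

theorem recI_blocks : ∃ B : ℕ, 2 ≤ B ∧ ∀ t J : ℕ, 2 ≤ t → (J:ℝ)/2 ≤ recI t (t ^ (B ^ J)) := by
  obtain ⟨C, hC0, hC⟩ := mertens
  have hl2 : 0 < Real.log 2 := Real.log_pos (by norm_num)
  obtain ⟨B, hB⟩ := exists_nat_gt (2 * (C / Real.log 2 + 1))
  have hB2 : (2:ℝ) ≤ B := by
    have : 0 ≤ C / Real.log 2 := by positivity
    linarith
  refine ⟨B, by exact_mod_cast hB2, ?_⟩
  have key : ∀ t : ℕ, 2 ≤ t → (1:ℝ)/2 ≤ recI t (t ^ B) := by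
    intro t ht
    have hBn : 1 ≤ B := by have : 2 ≤ B := by exact_mod_cast hB2
                           omega
    have h := (hC t (t^B) ht (Nat.le_self_pow (by omega) t)).2
    refine le_trans ?_ h
    have ht' : (2:ℝ) ≤ t := by exact_mod_cast ht
    have hlt : Real.log 2 ≤ Real.log t := Real.log_le_log (by norm_num) ht'
    push_cast
    rw [Real.log_pow, le_div_iff₀ (by apply mul_pos <;> linarith)]
    have h1 : C ≤ (B/2 - 1) * Real.log 2 := by
      have : C / Real.log 2 ≤ B/2 - 1 := by linarith
      rwa [div_le_iff₀ hl2] at this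
    have h2 : ((B:ℝ)/2 - 1) * Real.log 2 ≤ (B/2-1) * Real.log t := by
      apply mul_le_mul_of_nonneg_left hlt; linarith
    nlinarith
  intro t J ht
  induction J with
  | zero => simp [recI, prI]
  | succ J ih =>
    have hBn : 1 ≤ B := by have : 2 ≤ B := by exact_mod_cast hB2
                           omega
    have h1 : t ≤ t ^ (B^J) := Nat.le_self_pow (by positivity) t
    have h3 : t ^ (B^(J+1)) = (t ^ (B^J)) ^ B := by rw [← pow_mul, pow_succ]
    rw [h3, recI_add t (t^(B^J)) _ h1 (Nat.le_self_pow (by omega) _)]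
    have := key (t^(B^J)) (le_trans ht h1)
    push_cast
    linarith


theorem cnt_dvd (N d : ℕ) : ((Finset.Icc 1 N).filter (fun n => d ∣ n)).card = N / d := by
  rw [← Nat.Ioc_filter_dvd_card_eq_div]
  congr 1

theorem cnt_dvd_le (N d : ℕ) : (((Finset.Icc 1 N).filter (fun n => d ∣ n)).card : ℝ) ≤ (N:ℝ) / d := by
  rw [cnt_dvd]; exact Nat.cast_div_le

theorem tk (N : ℕ) (I : Finset ℕ) (hI : ∀ p ∈ I, p.Prime ∧ p ≤ N) (L : ℝ)
    (hL : L = ∑ p ∈ I, 1 / (p:ℝ)) (hL2 : 2 ≤ L) :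
    (((Finset.Icc 1 N).filter (fun n => (I.filter (fun p => p ∣ n)).card ≤ 1)).card : ℝ)
      ≤ 12 * N / L := by
  set om : ℕ → ℝ := fun n => ∑ p ∈ I, if p ∣ n then (1:ℝ) else 0 with hom
  have homc : ∀ n, om n = ((I.filter (fun p => p ∣ n)).card : ℝ) := by
    intro n; simp [hom]
  have s1 : (N:ℝ) * L - N ≤ ∑ n ∈ Finset.Icc 1 N, om n := by
    rw [hom, Finset.sum_comm]
    have h1 : ∀ p ∈ I, (N:ℝ) * (1/p) - 1 ≤ ∑ n ∈ Finset.Icc 1 N, if p ∣ n then (1:ℝ) else 0 := by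
      intro p hp
      rw [Finset.sum_boole, cnt_dvd]
      have h2 := Nat.lt_floor_add_one ((N:ℝ)/p)
      rw [Nat.floor_div_eq_div] at h2
      rw [mul_one_div]; linarith
    have h2 := Finset.sum_le_sum h1
    rw [Finset.sum_sub_distrib, ← Finset.mul_sum, ← hL] at h2
    have h3 : (I.card : ℝ) ≤ N := by
      have : I ⊆ Finset.Icc 1 N := by
        intro p hp
        have := hI p hp
        exact Finset.mem_Icc.2 ⟨this.1.pos, this.2⟩
      have := Finset.card_le_card this
      simp at this
      exact_mod_cast this
    simp only [Finset.sum_const, nsmul_eq_mul, mul_one] at h2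
    linarith
  have s2 : ∑ n ∈ Finset.Icc 1 N, (om n)^2 ≤ N * L^2 + N * L := by
    have e1 : ∀ n, (om n)^2 = ∑ p ∈ I, ∑ q ∈ I, if (p ∣ n ∧ q ∣ n) then (1:ℝ) else 0 := by
      intro n
      rw [sq, hom]
      simp only
      rw [Finset.sum_mul_sum]
      apply Finset.sum_congr rfl; intro p _
      apply Finset.sum_congr rfl; intro q _
      by_cases h1 : p ∣ n <;> by_cases h2 : q ∣ n <;> simp [h1, h2]
    simp_rw [e1]
    rw [Finset.sum_comm]
    have e2 : ∀ p ∈ I, ∑ n ∈ Finset.Icc 1 N, ∑ q ∈ I, (if (p ∣ n ∧ q ∣ n) then (1:ℝ) else 0)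
        ≤ ∑ q ∈ I, ((N:ℝ) * (1/p) * (1/q) + if p = q then (N:ℝ) * (1/p) else 0) := by
      intro p hp
      rw [Finset.sum_comm]
      apply Finset.sum_le_sum
      intro q hq
      rw [Finset.sum_boole]
      by_cases h : p = q
      · subst h
        simp only [and_self, if_true]
        have := cnt_dvd_le N p
        have h3 : (0:ℝ) ≤ (N:ℝ) * (1/p) * (1/p) := by positivity
        rw [mul_one_div (N:ℝ)] at *
        linarith
      · simp only [h, if_false, add_zero]
        have hc : Nat.Coprime p q := (Nat.coprime_primes (hI p hp).1 (hI q hq).1).2 h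
        have : (Finset.Icc 1 N).filter (fun n => p ∣ n ∧ q ∣ n) =
            (Finset.Icc 1 N).filter (fun n => p * q ∣ n) := by
          apply Finset.filter_congr
          intro n _
          constructor
          · rintro ⟨h1, h2⟩; exact hc.mul_dvd_of_dvd_of_dvd h1 h2
          · intro h; exact ⟨(Dvd.intro _ rfl).trans h, (Dvd.intro_left _ rfl).trans h⟩
        rw [this]
        refine (cnt_dvd_le N (p*q)).trans (le_of_eq ?_)
        push_cast
        rw [mul_assoc, one_div_mul_one_div, mul_one_div]
    refine (Finset.sum_le_sum e2).trans (le_of_eq ?_)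
    have e3 : ∀ p ∈ I, ∑ q ∈ I, ((N:ℝ) * (1/p) * (1/q) + if p = q then (N:ℝ) * (1/p) else 0)
        = N * L * (1/p) + N * (1/p) := by
      intro p hp
      rw [Finset.sum_add_distrib, ← Finset.mul_sum, ← hL]
      rw [Finset.sum_ite_eq]
      simp only [hp, if_true]; ring
    rw [Finset.sum_congr rfl e3, Finset.sum_add_distrib, ← Finset.mul_sum, ← Finset.mul_sum, ← hL]
    ring
  have s3 : ∑ n ∈ Finset.Icc 1 N, (om n - L)^2 ≤ 3 * N * L := by
    have : ∑ n ∈ Finset.Icc 1 N, (om n - L)^2 =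
        ∑ n ∈ Finset.Icc 1 N, (om n)^2 - 2 * L * ∑ n ∈ Finset.Icc 1 N, om n + N * L^2 := by
      rw [Finset.mul_sum, ← Finset.sum_sub_distrib]
      have : (N:ℝ) * L^2 = ∑ n ∈ Finset.Icc 1 N, L^2 := by simp
      rw [this, ← Finset.sum_add_distrib]
      apply Finset.sum_congr rfl; intro n _; ring
    rw [this]
    nlinarith
  set F := (Finset.Icc 1 N).filter (fun n => (I.filter (fun p => p ∣ n)).card ≤ 1) with hF
  have s4 : (F.card : ℝ) * (L-1)^2 ≤ 3 * N * L := by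
    refine le_trans ?_ s3
    calc (F.card : ℝ) * (L-1)^2 = ∑ n ∈ F, (L-1)^2 := by simp
      _ ≤ ∑ n ∈ F, (om n - L)^2 := by
        apply Finset.sum_le_sum
        intro n hn
        have h1 := (Finset.mem_filter.1 hn).2
        have h2 : om n ≤ 1 := by rw [homc]; exact_mod_cast h1
        nlinarith
      _ ≤ _ := by
        apply Finset.sum_le_sum_of_subset_of_nonneg (Finset.filter_subset _ _)
        intros; positivity
  rw [le_div_iff₀ (by linarith)]
  have h5 : L^2 ≤ 4 * (L-1)^2 := by nlinarith
  have h6 : (F.card : ℝ) * L^2 ≤ 12 * N * L := by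
    have : (F.card : ℝ) * L^2 ≤ F.card * (4 * (L-1)^2) := by gcongr
    linarith
  have h7 : ((F.card : ℝ) * L) * L ≤ (12 * N) * L := by nlinarith
  exact le_of_mul_le_mul_right h7 (by linarith)



theorem sigma1_ge (n : ℕ) (hn : 1 ≤ n) : n ≤ sigma1 n := by
  rw [sigma1, ArithmeticFunction.sigma_one_apply]
  exact Finset.single_le_sum (f := fun d => d) (fun _ _ => Nat.zero_le _)
    (Nat.mem_divisors_self n (by omega))

theorem sigma1_gt (n : ℕ) (hn : 2 ≤ n) : n < sigma1 n := by
  rw [sigma1, ArithmeticFunction.sigma_one_apply]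
  have h : ∑ d ∈ ({1, n} : Finset ℕ), d ≤ ∑ d ∈ n.divisors, d := by
    apply Finset.sum_le_sum_of_subset
    intro d hd
    simp only [Finset.mem_insert, Finset.mem_singleton] at hd
    rw [Nat.mem_divisors]
    rcases hd with h | h <;> subst h <;> simp <;> omega
  rw [Finset.sum_pair (by omega)] at h
  omega

theorem sigma1_le (n : ℕ) (hn : 1 ≤ n) : (sigma1 n : ℝ) ≤ n * (1 + Real.log n) := by
  rw [sigma1, ArithmeticFunction.sigma_eq_sum_div]
  push_cast
  have h1 : ∑ d ∈ n.divisors, ((n/d : ℕ):ℝ)^1 ≤ ∑ d ∈ n.divisors, (n:ℝ) * (d:ℝ)⁻¹ := by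
    apply Finset.sum_le_sum
    intro d _
    rw [pow_one, ← div_eq_mul_inv]
    exact Nat.cast_div_le
  refine h1.trans ?_
  rw [← Finset.mul_sum]
  gcongr
  have h2 := harmonic_le_one_add_log n
  refine le_trans ?_ h2
  rw [harmonic_eq_sum_Icc]
  push_cast
  apply Finset.sum_le_sum_of_subset_of_nonneg
  · intro d hd
    have hd' := Nat.mem_divisors.1 hd
    exact Finset.mem_Icc.2 ⟨Nat.pos_of_mem_divisors hd, Nat.divisor_le hd⟩
  · intros; positivity

theorem sigma1_mul {a b : ℕ} (h : Nat.Coprime a b) : sigma1 (a*b) = sigma1 a * sigma1 b :=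
  ArithmeticFunction.isMultiplicative_sigma.map_mul_of_coprime h

theorem sigma1_prime {p : ℕ} (h : p.Prime) : sigma1 p = p + 1 := by
  rw [sigma1, ArithmeticFunction.sigma_one_apply, h.divisors, Finset.sum_pair h.one_lt.ne]
  omega

theorem s_dvd_int {d n : ℕ} (hn : 1 ≤ n) (h : d ∣ s n) : (d:ℤ) ∣ (sigma1 n : ℤ) - n := by
  have h1 := sigma1_ge n hn
  rw [s] at h
  have := Int.natCast_dvd_natCast.2 h
  rwa [Nat.cast_sub h1] at this


theorem p3_of_p4 {p : ℕ} (hp : p.Prime) {a b : ℤ} (h : (p:ℤ)^4 ∣ a * b) (hb : ¬ (p:ℤ)^2 ∣ b) :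
    (p:ℤ)^3 ∣ a := by
  have hpi : Prime (p:ℤ) := Nat.prime_iff_prime_int.1 hp
  by_cases h1 : (p:ℤ) ∣ b
  · obtain ⟨c, rfl⟩ := h1
    have hc : ¬ (p:ℤ) ∣ c := by
      rintro ⟨e, rfl⟩
      exact hb ⟨e, by ring⟩
    have h2 : (p:ℤ) * (p:ℤ)^3 ∣ p * (a * c) := by
      have e1 : (p:ℤ) * (p:ℤ)^3 = p^4 := by ring
      have e2 : (p:ℤ) * (a * c) = a * (p * c) := by ring
      rw [e1, e2]; exact h
    have h3 := (mul_dvd_mul_iff_left hpi.ne_zero).1 h2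
    exact hpi.pow_dvd_of_dvd_mul_right 3 hc h3
  · exact (pow_dvd_pow _ (by norm_num)).trans (hpi.pow_dvd_of_dvd_mul_right 4 h1 h)

theorem s_expand {P m p : ℕ} (hm : 1 ≤ m) (hP : P.Prime) (hPm : ¬ P ∣ m) (h : p^4 ∣ s (P*m)) :
    (p:ℤ)^4 ∣ P * ((sigma1 m : ℤ) - m) + sigma1 m := by
  have h1 := s_dvd_int (Nat.mul_pos hP.pos hm) h
  rw [sigma1_mul ((Nat.Prime.coprime_iff_not_dvd hP).2 hPm), sigma1_prime hP] at h1
  push_cast at h1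
  convert h1 using 1
  ring

theorem A_key {P P' m p : ℕ} (hp : p.Prime) (hm : 1 ≤ m) (hP : P.Prime) (hP' : P'.Prime)
    (hPm : ¬ P ∣ m) (hPm' : ¬ P' ∣ m) (hpm : ¬ p^2 ∣ m)
    (h : p^4 ∣ s (P*m)) (h' : p^4 ∣ s (P'*m)) (hq : P / p^3 = P' / p^3) : P = P' := by
  have h1 := s_expand hm hP hPm h
  have h2 := s_expand hm hP' hPm' h'
  have h3 : (p:ℤ)^4 ∣ ((P:ℤ) - P') * ((sigma1 m : ℤ) - m) := by
    have e : ((P:ℤ) - P') * ((sigma1 m : ℤ) - m) = (P * ((sigma1 m : ℤ) - m) + sigma1 m) -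
      (P' * ((sigma1 m : ℤ) - m) + sigma1 m) := by ring
    rw [e]; exact dvd_sub h1 h2
  have h4 : ¬ (p:ℤ)^2 ∣ ((sigma1 m : ℤ) - m) := by
    intro h5
    have h6 : (p:ℤ)^2 ∣ P * ((sigma1 m : ℤ) - m) + sigma1 m :=
      (pow_dvd_pow _ (by norm_num)).trans h1
    have h7 : (p:ℤ)^2 ∣ sigma1 m := (dvd_add_right (h5.mul_left _)).1 h6
    have h8 : (p:ℤ)^2 ∣ m := (dvd_sub_right h7).1 h5
    exact hpm (by exact_mod_cast h8)
  have h5 := p3_of_p4 hp h3 h4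
  have h6 : P' ≡ P [MOD p^3] := by
    rw [Nat.modEq_iff_dvd]; push_cast; exact h5
  rw [← Nat.div_add_mod P (p^3), ← Nat.div_add_mod P' (p^3), hq]
  have : P' % p^3 = P % p^3 := h6
  rw [this]

theorem lemA (N p g : ℕ) (hp : p.Prime) (hg : 1 ≤ g) (V W : ℝ) (hV : 0 < V) (hW : 1 ≤ W)
    (F : Finset ℕ) (hF : ∀ n ∈ F, 1 ≤ n ∧ n ≤ N ∧ p^4 ∣ s n ∧ ¬ p^2 ∣ n ∧
      ∃ P : ℕ, P.Prime ∧ P ∣ n ∧ ¬ P^2 ∣ n ∧ V ≤ P ∧ (P:ℝ) ≤ W ∧ g ∣ n / P) :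
    (F.card : ℝ) ≤ N / (g * V) + N / (g * (p:ℝ)^3) * (1 + Real.log W) := by
  have hp0 : (0:ℝ) < p := by exact_mod_cast hp.pos
  have hg0 : (0:ℝ) < g := by exact_mod_cast hg
  have hF' : ∀ n, ∃ P : ℕ, n ∈ F → P.Prime ∧ P ∣ n ∧ ¬ P^2 ∣ n ∧ V ≤ P ∧ (P:ℝ) ≤ W ∧ g ∣ n / P := by
    intro n
    by_cases h : n ∈ F
    · obtain ⟨_, _, _, _, P, h⟩ := hF n h
      exact ⟨P, fun _ => h⟩
    · exact ⟨0, fun h' => absurd h' h⟩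
  choose f hf using hF'
  set T : ℕ := ⌊W⌋₊ / p^3 with hT
  set b : ℕ → ℝ := fun t => if t = 0 then N / V else N / (t * (p:ℝ)^3) with hb
  have hb0 : ∀ t, 0 ≤ b t := by
    intro t; simp only [hb]; split_ifs <;> positivity
  set G : Finset (Σ _ : ℕ, ℕ) := (Finset.range (T+1)).sigma
    (fun t => (Finset.Icc 1 ⌊b t⌋₊).filter (fun m => g ∣ m)) with hG
  have hcard : F.card ≤ G.card := by
    apply Finset.card_le_card_of_injOn (fun n => ⟨f n / p^3, n / f n⟩)
    · intro n hn
      obtain ⟨h1, h2, h3, h4, -⟩ := hF n hn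
      obtain ⟨q1, q2, q3, q4, q5, q6⟩ := hf n hn
      simp only [hG, Finset.coe_sigma, Set.mem_sigma_iff, Finset.mem_coe, Finset.mem_filter,
        Finset.mem_Icc, Finset.mem_range]
      have hpos : 1 ≤ n / f n := Nat.div_pos (Nat.le_of_dvd h1 q2) q1.pos
      have hfpos : (0:ℝ) < f n := by exact_mod_cast q1.pos
      have hle : ((n / f n : ℕ) : ℝ) ≤ N / (f n) := by
        refine (Nat.cast_div_le).trans ?_
        have : (n:ℝ) ≤ N := by exact_mod_cast h2
        gcongr
      refine ⟨?_, ⟨hpos, ?_⟩, q6⟩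
      · rw [hT]
        exact Nat.lt_succ_of_le (Nat.div_le_div_right (Nat.le_floor q5))
      · apply Nat.le_floor
        refine hle.trans ?_
        simp only [hb]
        split_ifs with h0
        · gcongr
        · have h5 : ((f n / p^3 : ℕ) : ℝ) * (p:ℝ)^3 ≤ f n := by
            exact_mod_cast Nat.div_mul_le_self (f n) (p^3)
          have h6 : (0:ℝ) < ((f n / p^3 : ℕ) : ℝ) := by exact_mod_cast Nat.pos_of_ne_zero h0
          gcongr
    · intro n hn n' hn' heq
      obtain ⟨h1, h2, h3, h4, -⟩ := hF n hn
      obtain ⟨q1, q2, q3, q4, q5, q6⟩ := hf n hn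
      obtain ⟨h1', h2', h3', h4', -⟩ := hF n' hn'
      obtain ⟨q1', q2', q3', q4', q5', q6'⟩ := hf n' hn'
      simp only [Sigma.mk.injEq, heq_eq_eq] at heq
      obtain ⟨e1, e2⟩ := heq
      have m1 : f n * (n / f n) = n := Nat.mul_div_cancel' q2
      have m2 : f n' * (n' / f n') = n' := Nat.mul_div_cancel' q2'
      have hpos : 1 ≤ n / f n := Nat.div_pos (Nat.le_of_dvd h1 q2) q1.pos
      have : f n = f n' := by
        apply A_key hp hpos q1 q1' _ _ _ _ _ e1
        · intro h; apply q3
          have h9 := mul_dvd_mul_left (f n) h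
          rwa [m1, ← sq] at h9
        · intro h; apply q3'
          have h9 := mul_dvd_mul_left (f n') h
          rwa [e2, m2, ← sq] at h9
        · intro h; exact h4 (h.trans (Nat.div_dvd_of_dvd q2))
        · rw [m1]; exact h3
        · rw [e2, m2]; exact h3'
      rw [← m1, ← m2, e2, this]
  have h1 : (F.card : ℝ) ≤ G.card := by exact_mod_cast hcard
  refine h1.trans ?_
  rw [hG, Finset.card_sigma]
  push_cast
  have h2 : ∀ t ∈ Finset.range (T+1), (((Finset.Icc 1 ⌊b t⌋₊).filter (fun m => g ∣ m)).card : ℝ)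
      ≤ b t / g := by
    intro t _
    refine (cnt_dvd_le _ _).trans ?_
    have := Nat.floor_le (hb0 t)
    gcongr
  refine (Finset.sum_le_sum h2).trans ?_
  rw [Finset.sum_range_succ']
  have h3 : b 0 / g = N / (g * V) := by simp only [hb, if_true]; field_simp
  have h4 : ∑ t ∈ Finset.range T, b (t+1) / g = N / (g * (p:ℝ)^3) * (harmonic T : ℝ) := by
    rw [harmonic]
    push_cast
    rw [Finset.mul_sum]
    apply Finset.sum_congr rfl
    intro t _
    simp only [hb]
    rw [if_neg (by omega)]
    push_cast
    have : (0:ℝ) < (t:ℝ)+1 := by positivity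
    field_simp
  have h5 : (harmonic T : ℝ) ≤ 1 + Real.log W := by
    refine (harmonic_le_one_add_log T).trans ?_
    rcases Nat.eq_zero_or_pos T with h | h
    · rw [h]; simp [Real.log_nonneg hW]
    · have hT1 : (0:ℝ) < T := by exact_mod_cast h
      have : (T:ℝ) ≤ W := by
        have h6 : T ≤ ⌊W⌋₊ := Nat.div_le_self _ _
        exact (Nat.cast_le.2 h6).trans (Nat.floor_le (by linarith))
      have := Real.log_le_log hT1 this
      linarith
  rw [h3, h4, add_comm]
  gcongr

/-- uniqueness of σ(e)/e for odd squarefree -/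
theorem prime_not_dvd_sigma {e R : ℕ} (he : Squarefree e) (hodd : ¬ 2 ∣ e) (hR : R.Prime)
    (hmax : ∀ r, r.Prime → r ∣ e → r ≤ R) : ¬ R ∣ sigma1 e := by
  induction e using Nat.recOnMul with
  | zero => simp at he
  | one => simp [sigma1, hR.one_lt.ne']
  | prime r hr =>
    rw [sigma1_prime hr]
    have h1 := hmax r hr dvd_rfl
    intro h
    have h2 : r ≠ 2 := by rintro rfl; exact hodd dvd_rfl
    have h3 := hr.two_le
    obtain ⟨c, hc⟩ := h
    have hR2 := hR.two_le
    have hc2 : c < 2 := by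
      by_contra hcc
      have : R * 2 ≤ R * c := Nat.mul_le_mul_left _ (by omega)
      omega
    have hc1 : c = 1 := by
      interval_cases c <;> omega
    rw [hc1, mul_one] at hc
    have o1 := hr.eq_two_or_odd
    have o2 := hR.eq_two_or_odd
    omega
  | mul a b iha ihb =>
    have hab := Nat.coprime_of_squarefree_mul he
    rw [sigma1_mul hab, hR.dvd_mul]
    push Not
    exact ⟨iha (he.squarefree_of_dvd (Dvd.intro _ rfl)) (fun h => hodd (h.mul_right _))
        (fun r hr h => hmax r hr (h.mul_right _)),
      ihb (he.squarefree_of_dvd (Dvd.intro_left _ rfl)) (fun h => hodd (h.mul_left _))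
        (fun r hr h => hmax r hr (h.mul_left _))⟩

theorem sigma_unique (M : ℕ) : ∀ e e' : ℕ, e ≤ M → Squarefree e → ¬ 2 ∣ e → Squarefree e' → ¬ 2 ∣ e' →
    sigma1 e * e' = sigma1 e' * e → e = e' := by
  induction M using Nat.strong_induction_on with
  | _ M ih =>
  intro e e' hM he ho he' ho' heq
  have he0 : e ≠ 0 := he.ne_zero
  have he0' : e' ≠ 0 := he'.ne_zero
  by_cases h1 : e * e' = 1
  · have := Nat.eq_one_of_mul_eq_one_right h1
    have := Nat.eq_one_of_mul_eq_one_left h1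
    omega
  -- the largest prime
  have hne : (e*e').primeFactors.Nonempty := by
    rw [Nat.nonempty_primeFactors]
    have : e * e' ≠ 0 := mul_ne_zero he0 he0'
    omega
  obtain ⟨R, hR, hRmax⟩ := Finset.exists_max_image _ id hne
  have hRp : R.Prime := Nat.prime_of_mem_primeFactors hR
  have hRd : R ∣ e * e' := Nat.dvd_of_mem_primeFactors hR
  have hm : ∀ r, r.Prime → r ∣ e → r ≤ R := fun r hr h =>
    hRmax r (Nat.mem_primeFactors.2 ⟨hr, h.mul_right _, mul_ne_zero he0 he0'⟩)
  have hm' : ∀ r, r.Prime → r ∣ e' → r ≤ R := fun r hr h =>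
    hRmax r (Nat.mem_primeFactors.2 ⟨hr, h.mul_left _, mul_ne_zero he0 he0'⟩)
  have n1 := prime_not_dvd_sigma he ho hRp hm
  have n2 := prime_not_dvd_sigma he' ho' hRp hm'
  have d1 : R ∣ e ∧ R ∣ e' := by
    rcases hRp.dvd_mul.1 hRd with h | h
    · have : R ∣ sigma1 e * e' := by rw [heq]; exact h.mul_left _
      exact ⟨h, (hRp.dvd_mul.1 this).resolve_left n1⟩
    · have : R ∣ sigma1 e' * e := by rw [← heq]; exact h.mul_left _
      exact ⟨(hRp.dvd_mul.1 this).resolve_left n2, h⟩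
  obtain ⟨⟨f, rfl⟩, ⟨f', rfl⟩⟩ := d1
  have c1 := Nat.coprime_of_squarefree_mul he
  have c2 := Nat.coprime_of_squarefree_mul he'
  rw [sigma1_mul c1, sigma1_mul c2] at heq
  have hs : 0 < sigma1 R := by rw [sigma1_prime hRp]; omega
  have hlt : f < R * f := by
    have hf : 0 < f := Nat.pos_of_ne_zero (by rintro rfl; simp at he0)
    have := hRp.two_le
    nlinarith
  have := ih f (by omega) f f' le_rfl (he.squarefree_of_dvd (Dvd.intro_left _ rfl))
    (fun h => ho (h.mul_left _)) (he'.squarefree_of_dvd (Dvd.intro_left _ rfl))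
    (fun h => ho' (h.mul_left _)) (by
      have h5 : (sigma1 R * R) * (sigma1 f * f') = (sigma1 R * R) * (sigma1 f' * f) := by
        linarith
      exact Nat.eq_of_mul_eq_mul_left (Nat.mul_pos hs hRp.pos) h5)
  rw [this]

theorem lemB (N p : ℕ) (hp : p.Prime) (V Y : ℝ) (hV : 0 < V)
    (hY : Y * Y * (1 + Real.log Y) < (p:ℝ)^4)
    (F : Finset ℕ) (hF : ∀ n ∈ F, 1 ≤ n ∧ n ≤ N ∧ p^4 ∣ s n ∧ ¬ p ∣ n ∧
      ∃ e : ℕ, e ∣ n ∧ Nat.Coprime e (n/e) ∧ Squarefree e ∧ ¬ 2 ∣ e ∧ V ≤ e ∧ (e:ℝ) ≤ Y) :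
    (F.card : ℝ) ≤ N / V := by
  have hF' : ∀ n, ∃ e : ℕ, n ∈ F → e ∣ n ∧ Nat.Coprime e (n/e) ∧ Squarefree e ∧ ¬ 2 ∣ e ∧
      V ≤ e ∧ (e:ℝ) ≤ Y := by
    intro n
    by_cases h : n ∈ F
    · obtain ⟨_, _, _, _, P, h⟩ := hF n h
      exact ⟨P, fun _ => h⟩
    · exact ⟨0, fun h' => absurd h' h⟩
  choose f hf using hF'
  have hsm : ∀ a b : ℕ, 1 ≤ a → (a:ℝ) ≤ Y → (b:ℝ) ≤ Y → sigma1 a * b < p^4 := by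
    intro a b ha haY hbY
    have h1 := sigma1_le a ha
    have ha1 : (1:ℝ) ≤ a := by exact_mod_cast ha
    have h2 : Real.log a ≤ Real.log Y := Real.log_le_log (by linarith) haY
    have h3 : 0 ≤ Real.log a := Real.log_nonneg ha1
    have h4 : (sigma1 a : ℝ) * b ≤ Y * (1 + Real.log Y) * Y := by
      have : (a:ℝ) * (1 + Real.log a) ≤ Y * (1 + Real.log Y) := by
        have : 0 ≤ Y := by linarith
        gcongr
      have h0 : 0 ≤ Y * (1 + Real.log Y) := by
        have : 0 ≤ Y := by linarith
        have : 0 ≤ Real.log Y := by linarith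
        positivity
      exact mul_le_mul (h1.trans this) hbY (by positivity) h0
    have : (sigma1 a : ℝ) * b < (p:ℝ)^4 := by nlinarith
    exact_mod_cast this
  have hcard : F.card ≤ (Finset.Icc 1 ⌊(N:ℝ)/V⌋₊).card := by
    apply Finset.card_le_card_of_injOn (fun n => n / f n)
    · intro n hn
      obtain ⟨h1, h2, h3, h4, -⟩ := hF n hn
      obtain ⟨q1, q2, q3, q4, q5, q6⟩ := hf n hn
      have hfpos : 0 < f n := Nat.pos_of_dvd_of_pos q1 h1
      simp only [Finset.coe_Icc, Set.mem_Icc]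
      refine ⟨Nat.div_pos (Nat.le_of_dvd h1 q1) hfpos, Nat.le_floor ?_⟩
      refine (Nat.cast_div_le).trans ?_
      have : (n:ℝ) ≤ N := by exact_mod_cast h2
      gcongr
    · intro n hn n' hn' heq
      obtain ⟨h1, h2, h3, h4, -⟩ := hF n hn
      obtain ⟨q1, q2, q3, q4, q5, q6⟩ := hf n hn
      obtain ⟨h1', h2', h3', h4', -⟩ := hF n' hn'
      obtain ⟨q1', q2', q3', q4', q5', q6'⟩ := hf n' hn'
      simp only at heq
      have m1 : f n * (n / f n) = n := Nat.mul_div_cancel' q1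
      have m2 : f n' * (n' / f n') = n' := Nat.mul_div_cancel' q1'
      have k1 := s_dvd_int h1 h3
      have k2 := s_dvd_int h1' h3'
      rw [← m1, sigma1_mul q2] at k1
      rw [← m2, sigma1_mul q2', ← heq] at k2
      set d := n / f n with hd
      set e := f n
      set e' := f n'
      have hpd : ¬ p ∣ d := fun h => h4 (h.trans (Nat.div_dvd_of_dvd q1))
      push_cast at k1 k2
      have hpi : Prime (p:ℤ) := Nat.prime_iff_prime_int.1 hp
      have k3 : (p:ℤ)^4 ∣ ((sigma1 e : ℤ) * e' - sigma1 e' * e) * d := by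
        have := dvd_sub (k1.mul_left (sigma1 e')) (k2.mul_left (sigma1 e))
        have e3 : ((sigma1 e : ℤ) * e' - sigma1 e' * e) * d =
          (sigma1 e') * ((sigma1 e : ℤ) * sigma1 d - e * d) -
          (sigma1 e) * ((sigma1 e' : ℤ) * sigma1 d - e' * d) := by ring
        rw [e3]; exact this
      have k4 := hpi.pow_dvd_of_dvd_mul_right 4 (by exact_mod_cast hpd) k3
      have he1 : 1 ≤ e := Nat.pos_of_dvd_of_pos q1 h1
      have he1' : 1 ≤ e' := Nat.pos_of_dvd_of_pos q1' h1'
      have l1 := hsm e e' he1 q6 q6'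
      have l2 := hsm e' e he1' q6' q6
      have k5 : (sigma1 e : ℤ) * e' - sigma1 e' * e = 0 := by
        apply Int.eq_zero_of_abs_lt_dvd k4
        have l1' : (sigma1 e : ℤ) * e' < (p:ℤ)^4 := by exact_mod_cast l1
        have l2' : (sigma1 e' : ℤ) * e < (p:ℤ)^4 := by exact_mod_cast l2
        have z1 : 0 ≤ (sigma1 e : ℤ) * e' := by positivity
        have z2 : 0 ≤ (sigma1 e' : ℤ) * e := by positivity
        rw [abs_lt]; constructor <;> linarith
      have k6 : sigma1 e * e' = sigma1 e' * e := by
        have : (sigma1 e : ℤ) * e' = sigma1 e' * e := by linarith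
        exact_mod_cast this
      have := sigma_unique e e e' le_rfl q3 q4 q3' q4' k6
      rw [← m1, ← m2, this, heq]
  have h1 : (F.card : ℝ) ≤ ((Finset.Icc 1 ⌊(N:ℝ)/V⌋₊).card : ℝ) := by exact_mod_cast hcard
  refine h1.trans ?_
  simp only [Nat.card_Icc, Nat.add_sub_cancel]
  exact Nat.floor_le (by positivity)

theorem greedy (S : Finset ℕ) (V z : ℝ) (t0 : ℕ) (ht0 : (t0:ℝ) < V) (hz : ∀ r ∈ S, (r:ℝ) ≤ z)
    (hprod : V ≤ t0 * ∏ r ∈ S, (r:ℝ)) :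
    ∃ T ⊆ S, V ≤ t0 * ∏ r ∈ T, (r:ℝ) ∧ t0 * ∏ r ∈ T, (r:ℝ) ≤ V * z := by
  induction S using Finset.induction_on with
  | empty => simp at hprod; linarith
  | insert a S ha ih =>
    by_cases h : V ≤ t0 * ∏ r ∈ S, (r:ℝ)
    · obtain ⟨T, hT, h1⟩ := ih (fun r hr => hz r (Finset.mem_insert_of_mem hr)) h
      exact ⟨T, hT.trans (Finset.subset_insert _ _), h1⟩
    · refine ⟨insert a S, subset_rfl, hprod, ?_⟩
      rw [Finset.prod_insert ha]
      push Not at h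
      have h1 := hz a (Finset.mem_insert_self _ _)
      have h2 : (0:ℝ) ≤ t0 * ∏ r ∈ S, (r:ℝ) := by positivity
      calc (t0:ℝ) * (a * ∏ r ∈ S, (r:ℝ)) = (t0 * ∏ r ∈ S, (r:ℝ)) * a := by ring
        _ ≤ V * z := by
          apply mul_le_mul h.le h1 (by positivity) (by linarith)


theorem cntE1 (N ξ : ℕ) : (((Finset.Icc 1 N).filter (fun n => ∃ r, ξ < r ∧ r^2 ∣ n)).card : ℝ)
    ≤ N * (2 / ((ξ:ℝ)+1)) := by
  have hsub : (Finset.Icc 1 N).filter (fun n => ∃ r, ξ < r ∧ r^2 ∣ n) ⊆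
      (Finset.Ioo ξ (N+1)).biUnion (fun r => (Finset.Icc 1 N).filter (fun n => r^2 ∣ n)) := by
    intro n hn
    simp only [Finset.mem_filter, Finset.mem_Icc] at hn
    obtain ⟨⟨h1, h2⟩, r, hr, hd⟩ := hn
    simp only [Finset.mem_biUnion, Finset.mem_Ioo, Finset.mem_filter, Finset.mem_Icc]
    refine ⟨r, ⟨hr, ?_⟩, ⟨h1, h2⟩, hd⟩
    have := Nat.le_of_dvd h1 hd
    nlinarith
  have h1 := (Finset.card_le_card hsub).trans Finset.card_biUnion_le
  have h2 : (((Finset.Icc 1 N).filter (fun n => ∃ r, ξ < r ∧ r^2 ∣ n)).card : ℝ) ≤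
      ∑ r ∈ Finset.Ioo ξ (N+1), (((Finset.Icc 1 N).filter (fun n => r^2 ∣ n)).card : ℝ) := by
    exact_mod_cast h1
  refine h2.trans ?_
  have h3 := sum_Ioo_inv_sq_le (α := ℝ) ξ (N+1)
  calc _ ≤ ∑ r ∈ Finset.Ioo ξ (N+1), (N:ℝ) * ((r:ℝ)^2)⁻¹ := by
        apply Finset.sum_le_sum
        intro r _
        have := cnt_dvd_le N (r^2)
        push_cast at this
        rw [← div_eq_mul_inv]; exact this
    _ = N * ∑ r ∈ Finset.Ioo ξ (N+1), ((r:ℝ)^2)⁻¹ := by rw [Finset.mul_sum]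
    _ ≤ _ := by gcongr

theorem cntE2 (ε : ℝ) (hε : 0 < ε) : ∃ ξ0 : ℕ, ∀ ξ ≥ ξ0, ∀ N : ℕ,
    (((Finset.Icc 1 N).filter (fun n => ∃ p : ℕ, ξ < p ∧ (p:ℝ) ≤ Real.log N ∧
      ∀ P : ℕ, P.Prime → P ∣ n → (p:ℝ)^2 ≤ P → ¬ (P:ℝ) ≤ Real.exp (Real.sqrt p))).card : ℝ) ≤ ε * N := by
  obtain ⟨B, hB2, hB⟩ := recI_blocks
  -- growth
  have hgrow : ∀ᶠ j : ℕ in atTop, (j+1) + 2 + B * (j+1)^2 ≤ 2^j := by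
    have h1 : Tendsto (fun j : ℕ => (j:ℝ)^2 / 2^j) atTop (nhds 0) := by
      have := tendsto_pow_const_div_const_pow_of_one_lt 2 (r := (2:ℝ)) (by norm_num)
      exact this
    have h2 : ∀ᶠ j : ℕ in atTop, (j:ℝ)^2 / 2^j < 1 / (8 * (B+1)) :=
      h1.eventually_lt_const (by positivity)
    filter_upwards [h2, eventually_ge_atTop 1] with j hj hj1
    have h3 : (j:ℝ)^2 * (8 * (B+1)) < 1 * 2^j := by
      rwa [div_lt_div_iff₀ (by positivity) (by positivity)] at hj
    have h4 : j^2 * (8 * (B+1)) < 2^j := by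
      have : (j:ℝ)^2 * (8 * (B+1)) < 2^j := by linarith
      exact_mod_cast this
    have h5 : (j+1)^2 ≤ 4 * j^2 := by nlinarith
    have h6 : B * (j+1)^2 ≤ B * (4 * j^2) := Nat.mul_le_mul_left _ h5
    have h7 : 1 ≤ j^2 := Nat.one_le_pow _ _ hj1
    have h8 : j ≤ j^2 := Nat.le_self_pow (by norm_num) j
    nlinarith
  obtain ⟨j1, hj1⟩ := eventually_atTop.1 hgrow
  obtain ⟨m, hm⟩ := exists_nat_gt (48 / ε)
  set j0 : ℕ := max (j1 + 1) (max m 3) with hj0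
  refine ⟨2^(2^j0), ?_⟩
  intro ξ hξ N
  set t : ℕ → ℕ := fun j => 2^(2^(j+2)) with ht
  set u : ℕ → ℕ := fun j => (t j)^(B^(j^2)) with hu
  set J : Finset ℕ := (Finset.Ioo (j0-1) (N+1)).filter (fun j => u j ≤ N) with hJ
  have hsub : (Finset.Icc 1 N).filter (fun n => ∃ p : ℕ, ξ < p ∧ (p:ℝ) ≤ Real.log N ∧
      ∀ P : ℕ, P.Prime → P ∣ n → (p:ℝ)^2 ≤ P → ¬ (P:ℝ) ≤ Real.exp (Real.sqrt p)) ⊆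
      J.biUnion (fun j => (Finset.Icc 1 N).filter
        (fun n => ((prI (t j) (u j)).filter (fun p => p ∣ n)).card ≤ 1)) := by
    intro n hn
    simp only [Finset.mem_filter, Finset.mem_Icc] at hn
    obtain ⟨⟨h1, h2⟩, p, hp, hpN, hno⟩ := hn
    have hN1 : 1 ≤ N := h1.trans h2
    have hp0 : p ≠ 0 := by omega
    set j := Nat.log 2 (Nat.log 2 p) with hj
    have hl0 : 2^j0 ≤ Nat.log 2 p := by
      apply Nat.le_log_of_pow_le (by norm_num); omega
    have hl1 : Nat.log 2 p ≠ 0 := by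
      have : 0 < 2^j0 := by positivity
      omega
    have hjj : j0 ≤ j := Nat.le_log_of_pow_le (by norm_num) hl0
    have hlow : 2^(2^j) ≤ p := by
      have a1 : 2^j ≤ Nat.log 2 p := Nat.pow_log_le_self 2 hl1
      exact (Nat.pow_le_pow_right (by norm_num) a1).trans (Nat.pow_log_le_self 2 hp0)
    have hup : p^2 ≤ t j := by
      have a1 : Nat.log 2 p < 2^(j+1) := Nat.lt_pow_succ_log_self (by norm_num) _
      have a2 : p < 2^(Nat.log 2 p + 1) := Nat.lt_pow_succ_log_self (by norm_num) _
      have a3 : p ≤ 2^(2^(j+1)) := a2.le.trans (Nat.pow_le_pow_right (by norm_num) a1)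
      calc p^2 ≤ (2^(2^(j+1)))^2 := Nat.pow_le_pow_left a3 2
        _ = t j := by simp only [ht]; rw [← pow_mul]; congr 1
    have hpR : (1:ℝ) ≤ p := by exact_mod_cast Nat.pos_of_ne_zero hp0
    have huexp : (u j : ℝ) ≤ Real.exp (Real.sqrt p) := by
      have b1 : u j ≤ 2^(2^(2^(j-1))) := by
        simp only [hu, ht]
        rw [← pow_mul]
        apply Nat.pow_le_pow_right (by norm_num)
        have b2 : B^(j^2) ≤ 2^(B * j^2) := by
          rw [pow_mul]
          exact Nat.pow_le_pow_left (Nat.lt_two_pow_self).le _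
        calc 2^(j+2) * B^(j^2) ≤ 2^(j+2) * 2^(B*j^2) := Nat.mul_le_mul_left _ b2
          _ = 2^(j+2+B*j^2) := by rw [← pow_add]
          _ ≤ 2^(2^(j-1)) := by
            apply Nat.pow_le_pow_right (by norm_num)
            have := hj1 (j-1) (by omega)
            have e : j - 1 + 1 = j := by omega
            rwa [e] at this
      have b3 : ((2:ℝ)^(2^(2^(j-1)))) ≤ Real.exp ((2^(2^(j-1)) : ℕ)) := by
        rw [← Real.exp_one_pow]
        apply pow_le_pow_left₀ (by norm_num)
        have := Real.add_one_le_exp 1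
        linarith
      have b4 : ((2^(2^(j-1)) : ℕ) : ℝ) ≤ Real.sqrt p := by
        apply Real.le_sqrt_of_sq_le
        have : (2^(2^(j-1)))^2 ≤ p := by
          rw [← pow_mul, ← pow_succ]
          have e : j - 1 + 1 = j := by omega
          rw [e]; exact hlow
        exact_mod_cast this
      calc (u j : ℝ) ≤ (2:ℝ)^(2^(2^(j-1))) := by exact_mod_cast b1
        _ ≤ _ := b3.trans (Real.exp_le_exp.2 b4)
    have hexpN : Real.exp (Real.sqrt p) ≤ N := by
      rw [← Real.exp_log (show (0:ℝ) < N by exact_mod_cast hN1)]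
      apply Real.exp_le_exp.2
      refine le_trans ?_ hpN
      rw [Real.sqrt_le_left (by linarith)]
      nlinarith
    simp only [Finset.mem_biUnion, Finset.mem_filter, Finset.mem_Icc, hJ, Finset.mem_Ioo]
    refine ⟨j, ⟨⟨by omega, ?_⟩, by exact_mod_cast huexp.trans hexpN⟩, ⟨h1, h2⟩, ?_⟩
    · have : j < p := by
        have a1 : j < 2^j := Nat.lt_two_pow_self
        have a2 : 2^j < 2^(2^j) := Nat.lt_two_pow_self
        omega
      have a3 : (p:ℝ) ≤ N := hpN.trans (Real.log_le_self (by positivity))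
      have : p ≤ N := by exact_mod_cast a3
      omega
    · have : (prI (t j) (u j)).filter (fun p => p ∣ n) = ∅ := by
        rw [Finset.filter_eq_empty_iff]
        intro P hP hPn
        rw [mem_prI] at hP
        refine hno P hP.2 hPn ?_ ?_
        · have : p^2 ≤ P := hup.trans hP.1.1.le
          exact_mod_cast this
        · exact le_trans (by exact_mod_cast hP.1.2) huexp
      rw [this]; simp
  have h1 := (Finset.card_le_card hsub).trans Finset.card_biUnion_le
  have h2 : ∀ j ∈ J, (((Finset.Icc 1 N).filter
        (fun n => ((prI (t j) (u j)).filter (fun p => p ∣ n)).card ≤ 1)).card : ℝ)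
        ≤ 24 * N * ((j:ℝ)^2)⁻¹ := by
    intro j hj
    simp only [hJ, Finset.mem_filter, Finset.mem_Ioo] at hj
    have hj3 : 3 ≤ j := by
      have : 3 ≤ j0 := le_trans (le_max_right _ _) (le_max_right _ _)
      omega
    have hj3' : (3:ℝ) ≤ j := by exact_mod_cast hj3
    have hr := hB (t j) (j^2) (by
      simp only [ht]; exact Nat.le_self_pow (by positivity) 2)
    push_cast at hr
    have hr2 : (2:ℝ) ≤ recI (t j) (u j) := by
      refine le_trans ?_ hr
      nlinarith
    have := tk N (prI (t j) (u j)) (fun p hp => by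
      rw [mem_prI] at hp
      exact ⟨hp.2, hp.1.2.trans hj.2⟩) (recI (t j) (u j)) rfl hr2
    refine this.trans ?_
    rw [div_le_iff₀ (by linarith)]
    have h0 : (0:ℝ) < (j:ℝ)^2 := by positivity
    calc 12 * (N:ℝ) = 24 * N * ((j:ℝ)^2)⁻¹ * ((j:ℝ)^2/2) := by field_simp; ring
      _ ≤ _ := by gcongr
  have h3 : (((Finset.Icc 1 N).filter (fun n => ∃ p : ℕ, ξ < p ∧ (p:ℝ) ≤ Real.log N ∧
      ∀ P : ℕ, P.Prime → P ∣ n → (p:ℝ)^2 ≤ P → ¬ (P:ℝ) ≤ Real.exp (Real.sqrt p))).card : ℝ)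
      ≤ ∑ j ∈ J, (((Finset.Icc 1 N).filter
        (fun n => ((prI (t j) (u j)).filter (fun p => p ∣ n)).card ≤ 1)).card : ℝ) := by
    exact_mod_cast h1
  refine h3.trans ((Finset.sum_le_sum h2).trans ?_)
  rw [← Finset.mul_sum]
  have h4 : ∑ j ∈ J, ((j:ℝ)^2)⁻¹ ≤ 2 / (((j0-1 : ℕ):ℝ)+1) := by
    refine le_trans ?_ (sum_Ioo_inv_sq_le (α := ℝ) (j0-1) (N+1))
    apply Finset.sum_le_sum_of_subset_of_nonneg (Finset.filter_subset _ _)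
    intros; positivity
  have h5 : ((j0-1 : ℕ):ℝ)+1 = j0 := by
    have : 3 ≤ j0 := le_trans (le_max_right _ _) (le_max_right _ _)
    rw [Nat.cast_sub (by omega)]; simp
  rw [h5] at h4
  have h6 : 48 / ε < j0 := by
    have : m ≤ j0 := le_trans (le_max_left _ _) (le_max_right _ _)
    exact hm.trans_le (by exact_mod_cast this)
  have hj0p : (0:ℝ) < j0 := lt_trans (by positivity) h6
  have h7 : 24 * (2 / (j0:ℝ)) ≤ ε := by
    rw [div_lt_iff₀ hε] at h6
    rw [mul_div_assoc', div_le_iff₀ hj0p]; linarith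
  calc 24 * (N:ℝ) * ∑ j ∈ J, ((j:ℝ)^2)⁻¹ ≤ 24 * N * (2 / j0) := by gcongr
    _ = (24 * (2/(j0:ℝ))) * N := by ring
    _ ≤ ε * N := by gcongr


theorem recI_nonneg (a b : ℕ) : 0 ≤ recI a b := by
  unfold recI; exact Finset.sum_nonneg (fun _ _ => by positivity)

theorem cntE2' (ε : ℝ) (hε : 0 < ε) : ∃ δ : ℝ, 0 < δ ∧ δ ≤ 1 ∧ ∀ᶠ N : ℕ in atTop,
    (((Finset.Icc 1 N).filter (fun n => ¬ ∃ P Q : ℕ, P ≠ Q ∧ P.Prime ∧ Q.Prime ∧ P ∣ n ∧ Q ∣ n ∧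
      (N:ℝ)^δ ≤ P ∧ (N:ℝ)^δ ≤ Q)).card : ℝ) ≤ ε * N := by
  obtain ⟨B, hB2, hB⟩ := recI_blocks
  obtain ⟨J, hJ⟩ := exists_nat_ge (24/ε + 4)
  have hJ4 : (4:ℝ) ≤ J := le_trans (by have : 0 < 24/ε := by positivity
                                       linarith) hJ
  have hJe : 24/ε ≤ J := by linarith
  set D := B^J with hD
  have hDpos : 0 < D := by positivity
  have hD1 : (1:ℝ) ≤ D := by exact_mod_cast hDpos
  refine ⟨1/(D:ℝ), by positivity, by rw [div_le_one (by linarith)]; exact hD1, ?_⟩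
  filter_upwards [eventually_ge_atTop (2^D)] with N hN
  set t := ⌊(N:ℝ)^(1/(D:ℝ))⌋₊ with ht
  have hpw : ((N:ℝ)^(1/(D:ℝ)))^D = N := by
    rw [← Real.rpow_natCast, ← Real.rpow_mul (by positivity)]
    rw [one_div_mul_cancel (by positivity), Real.rpow_one]
  have ht2 : 2 ≤ t := by
    apply Nat.le_floor
    have : ((2:ℕ):ℝ)^D ≤ ((N:ℝ)^(1/(D:ℝ)))^D := by
      rw [hpw]; exact_mod_cast hN
    exact le_of_pow_le_pow_left₀ hDpos.ne' (by positivity) this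
  have htN : t^D ≤ N := by
    have : (t:ℝ)^D ≤ N := by
      rw [← hpw]
      gcongr
      exact Nat.floor_le (by positivity)
    exact_mod_cast this
  have h1 := hB t J ht2
  have h2 : recI t N = recI t (t^D) + recI (t^D) N :=
    recI_add t (t^D) N (Nat.le_self_pow hDpos.ne' t) htN
  have h3 := recI_nonneg (t^D) N
  have hL : (J:ℝ)/2 ≤ recI t N := by linarith
  have htk := tk N (prI t N) (fun p hp => by
      rw [mem_prI] at hp
      exact ⟨hp.2, hp.1.2⟩) (recI t N) rfl (by linarith)
  have hfin : 12 * (N:ℝ) / recI t N ≤ ε * N := by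
    rw [div_le_iff₀ (by linarith)]
    have : 24 ≤ J * ε := by rwa [div_le_iff₀ hε] at hJe
    have h5 : 12 ≤ ε * recI t N := by nlinarith
    have : (0:ℝ) ≤ N := by positivity
    nlinarith
  refine le_trans ?_ (htk.trans hfin)
  norm_cast
  apply Finset.card_le_card
  intro n hn
  simp only [Finset.mem_filter] at hn ⊢
  refine ⟨hn.1, ?_⟩
  by_contra hc
  push Not at hc
  rw [Finset.one_lt_card] at hc
  obtain ⟨P, hP, Q, hQ, hne⟩ := hc
  simp only [Finset.mem_filter, mem_prI] at hP hQ
  have key : ∀ P : ℕ, t < P → (N:ℝ)^(1/(D:ℝ)) ≤ P := by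
    intro P hP
    have h := Nat.lt_floor_add_one ((N:ℝ)^(1/(D:ℝ)))
    have : ((t:ℝ)+1) ≤ P := by exact_mod_cast hP
    linarith
  exact hn.2 ⟨P, Q, hne, hP.1.2, hQ.1.2, hP.2, hQ.2, key P hP.1.1.1, key Q hQ.1.1.1⟩

theorem cntE3 (δ ε : ℝ) (hδ : 0 < δ) (hε : 0 < ε) : ∃ κ : ℝ, 0 < κ ∧ κ ≤ 1 ∧ ∀ᶠ N : ℕ in atTop,
    (((Finset.Icc 1 N).filter (fun n => ∃ Q R : ℕ, Q < R ∧ Q.Prime ∧ R.Prime ∧ Q ∣ n ∧ R ∣ n ∧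
      (N:ℝ)^δ ≤ Q ∧ (R:ℝ) ≤ (Q:ℝ)^(1+κ))).card : ℝ) ≤ ε * N := by
  obtain ⟨C, hC0, hC⟩ := mertens
  set κ := min 1 (ε*δ/16) with hκ
  have hκ0 : 0 < κ := by positivity
  have hκ1 : κ ≤ 1 := min_le_left _ _
  have hκ2 : κ ≤ ε*δ/16 := min_le_right _ _
  refine ⟨κ, hκ0, hκ1, ?_⟩
  have T1 : Tendsto (fun N : ℕ => (N:ℝ)^(δ/2)) atTop atTop :=
    (tendsto_rpow_atTop (by positivity)).comp tendsto_natCast_atTop_atTop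
  have T2 : Tendsto (fun N : ℕ => Real.log N) atTop atTop :=
    Real.tendsto_log_atTop.comp tendsto_natCast_atTop_atTop
  filter_upwards [T1.eventually_ge_atTop 3, T2.eventually_ge_atTop C,
    T2.eventually_ge_atTop (4*C/(κ*δ)), T2.eventually_ge_atTop (4/δ), eventually_ge_atTop 2]
    with N h1 h2 h3 h4 hN2
  have hNr : (2:ℝ) ≤ N := by exact_mod_cast hN2
  have hNp : (0:ℝ) < N := by linarith
  have hlogN : 0 < Real.log N := Real.log_pos (by linarith)
  set a := ⌊(N:ℝ)^(δ/2)⌋₊ with ha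
  have ha2 : 2 ≤ a := Nat.le_floor (by push_cast; linarith)
  have har : (2:ℝ) ≤ a := by exact_mod_cast ha2
  have hale : (a:ℝ) ≤ (N:ℝ)^(δ/2) := Nat.floor_le (by positivity)
  have hage : (N:ℝ)^(δ/2) ≤ 2 * a := by
    have := Nat.lt_floor_add_one ((N:ℝ)^(δ/2))
    rw [← ha] at this
    linarith
  -- log a ≥ δ/4 log N
  have hloga : δ/4 * Real.log N ≤ Real.log a := by
    have h5 : Real.log ((N:ℝ)^(δ/2)) ≤ Real.log (2*a) := Real.log_le_log (by positivity) hage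
    rw [Real.log_rpow hNp, Real.log_mul (by norm_num) (by positivity)] at h5
    have h6 : Real.log 2 ≤ 1 := by linarith [Real.log_two_lt_d9]
    rw [div_le_iff₀ hδ] at h4
    nlinarith
  have hloga0 : 0 < Real.log a := Real.log_pos (by linarith)
  have hinner : ∀ Q ∈ prI a N, recI Q ⌊(Q:ℝ)^(1+κ)⌋₊ ≤ 2*κ := by
    intro Q hQ
    rw [mem_prI] at hQ
    have hQ2 : 2 ≤ Q := hQ.2.two_le
    have hQr : (2:ℝ) ≤ Q := by exact_mod_cast hQ2
    have hlogQ : Real.log a ≤ Real.log Q := Real.log_le_log (by linarith) (by exact_mod_cast hQ.1.1.le)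
    have hQle : Q ≤ ⌊(Q:ℝ)^(1+κ)⌋₊ := by
      apply Nat.le_floor
      calc (Q:ℝ) = (Q:ℝ)^(1:ℝ) := (Real.rpow_one _).symm
        _ ≤ _ := Real.rpow_le_rpow_of_exponent_le (by linarith) (by linarith)
    refine (hC Q _ hQ2 hQle).1.trans ?_
    rw [div_le_iff₀ (by linarith)]
    have h5 : Real.log (⌊(Q:ℝ)^(1+κ)⌋₊:ℝ) ≤ (1+κ)*Real.log Q := by
      rw [← Real.log_rpow (by linarith)]
      apply Real.log_le_log
      · have : 0 < ⌊(Q:ℝ)^(1+κ)⌋₊ := by omega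
        exact_mod_cast this
      · exact Nat.floor_le (by positivity)
    have h6 : C ≤ κ * Real.log Q := by
      rw [div_le_iff₀ (by positivity)] at h3
      have : κ * (δ/4*Real.log N) ≤ κ * Real.log Q := by
        apply mul_le_mul_of_nonneg_left _ hκ0.le
        linarith
      nlinarith
    nlinarith
  have houter : recI a N ≤ 8/δ := by
    by_cases haN : a ≤ N
    · refine (hC a N ha2 haN).1.trans ?_
      rw [div_le_div_iff₀ hloga0 hδ]
      nlinarith
    · have : prI a N = ∅ := by
        ext p; rw [mem_prI]; simp; intro h h'; omega
      unfold recI; rw [this]; simp; positivity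
  have hsub : (Finset.Icc 1 N).filter (fun n => ∃ Q R : ℕ, Q < R ∧ Q.Prime ∧ R.Prime ∧ Q ∣ n ∧ R ∣ n ∧
      (N:ℝ)^δ ≤ Q ∧ (R:ℝ) ≤ (Q:ℝ)^(1+κ)) ⊆
      (prI a N).biUnion (fun Q => (prI Q ⌊(Q:ℝ)^(1+κ)⌋₊).biUnion
        (fun R => (Finset.Icc 1 N).filter (fun n => Q*R ∣ n))) := by
    intro n hn
    simp only [Finset.mem_filter, Finset.mem_Icc] at hn
    obtain ⟨⟨hn1, hn2⟩, Q, R, hQR, hQ, hR, hQn, hRn, hNQ, hRQ⟩ := hn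
    simp only [Finset.mem_biUnion, Finset.mem_filter, Finset.mem_Icc, mem_prI]
    refine ⟨Q, ⟨⟨?_, (Nat.le_of_dvd hn1 hQn).trans hn2⟩, hQ⟩, R, ⟨⟨hQR, Nat.le_floor hRQ⟩, hR⟩,
      ⟨hn1, hn2⟩, ?_⟩
    · have h7 : (a:ℝ) < Q := by
        refine lt_of_lt_of_le ?_ hNQ
        refine lt_of_le_of_lt hale ?_
        exact Real.rpow_lt_rpow_of_exponent_lt (by linarith) (by linarith)
      exact_mod_cast h7
    · exact Nat.Coprime.mul_dvd_of_dvd_of_dvd ((Nat.coprime_primes hQ hR).2 hQR.ne) hQn hRn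
  have hcard : (((Finset.Icc 1 N).filter (fun n => ∃ Q R : ℕ, Q < R ∧ Q.Prime ∧ R.Prime ∧ Q ∣ n ∧ R ∣ n ∧
      (N:ℝ)^δ ≤ Q ∧ (R:ℝ) ≤ (Q:ℝ)^(1+κ))).card : ℝ) ≤
      ∑ Q ∈ prI a N, ∑ R ∈ prI Q ⌊(Q:ℝ)^(1+κ)⌋₊,
        (((Finset.Icc 1 N).filter (fun n => Q*R ∣ n)).card : ℝ) := by
    have := (Finset.card_le_card hsub).trans (Finset.card_biUnion_le.trans
      (Finset.sum_le_sum (fun Q _ => Finset.card_biUnion_le)))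
    exact_mod_cast this
  refine hcard.trans ?_
  calc _ ≤ ∑ Q ∈ prI a N, ∑ R ∈ prI Q ⌊(Q:ℝ)^(1+κ)⌋₊, (N:ℝ) * (1/(Q:ℝ)) * (1/(R:ℝ)) := by
        apply Finset.sum_le_sum; intro Q _
        apply Finset.sum_le_sum; intro R _
        refine (cnt_dvd_le N (Q*R)).trans (le_of_eq ?_)
        push_cast
        rw [one_div, one_div, div_eq_mul_inv, mul_inv, mul_assoc]
    _ = ∑ Q ∈ prI a N, (N:ℝ) * (1/(Q:ℝ)) * recI Q ⌊(Q:ℝ)^(1+κ)⌋₊ := by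
        apply Finset.sum_congr rfl; intro Q _
        rw [← Finset.mul_sum]; rfl
    _ ≤ ∑ Q ∈ prI a N, (N:ℝ) * (1/(Q:ℝ)) * (2*κ) := by
        apply Finset.sum_le_sum; intro Q hQ
        exact mul_le_mul_of_nonneg_left (hinner Q hQ) (by positivity)
    _ = N * (2*κ) * recI a N := by
        unfold recI
        rw [Finset.mul_sum]
        apply Finset.sum_congr rfl; intro Q _; ring
    _ ≤ N * (2*κ) * (8/δ) := mul_le_mul_of_nonneg_left houter (by positivity)
    _ ≤ N * (2*(ε*δ/16)) * (8/δ) := by gcongr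
    _ = ε * N := by field_simp; ring

theorem tail (η ε : ℝ) (hη : 0 < η) (hε : 0 < ε) : ∀ᶠ M : ℕ in atTop, ∀ S : Finset ℕ,
    (∀ p ∈ S, M < p) → ∑ p ∈ S, 1/((p:ℝ)^(1+η)) ≤ ε := by
  have hs : Summable (fun p : ℕ => 1/((p:ℝ)^(1+η))) :=
    Real.summable_one_div_nat_rpow.2 (by linarith)
  obtain ⟨T, hT⟩ := summable_iff_vanishing.1 hs (Metric.ball 0 ε) (Metric.ball_mem_nhds 0 hε)
  filter_upwards [eventually_ge_atTop (T.sup id)] with M hM S hS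
  have h := hT S (by
    rw [Finset.disjoint_left]
    intro p hp hpT
    have := hS p hp
    have h2 : p ≤ T.sup id := Finset.le_sup (f := id) hpT
    omega)
  rw [mem_ball_zero_iff, Real.norm_eq_abs] at h
  exact (le_abs_self _).trans h.le


theorem le_prod_large (n ξ : ℕ) (hn : 1 ≤ n) (hsq : ∀ r, ξ < r → ¬ r^2 ∣ n) :
    n ≤ ξ^2 * 4^ξ * ∏ r ∈ n.primeFactors.filter (fun r => ξ < r), r := by
  obtain ⟨a, b, ha, hb, hab, hsf⟩ := Nat.sq_mul_squarefree_of_pos hn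
  have hbξ : b ≤ ξ := by
    by_contra h
    exact hsq b (by omega) ⟨a, hab.symm⟩
  have h1 : ∏ p ∈ a.primeFactors, p = a := Nat.prod_primeFactors_of_squarefree hsf
  have h2 : a ≤ 4^ξ * ∏ r ∈ n.primeFactors.filter (fun r => ξ < r), r := by
    have han : a ∣ n := ⟨b^2, by rw [← hab]; ring⟩
    have hsub : a.primeFactors ⊆ n.primeFactors := Nat.primeFactors_mono han (by omega)
    calc a = ∏ p ∈ a.primeFactors, p := h1.symm
      _ = (∏ p ∈ a.primeFactors.filter (fun r => ¬ ξ < r), p) *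
          ∏ p ∈ a.primeFactors.filter (fun r => ξ < r), p := by
          rw [mul_comm, Finset.prod_filter_mul_prod_filter_not]
      _ ≤ 4^ξ * ∏ r ∈ n.primeFactors.filter (fun r => ξ < r), r := by
          apply Nat.mul_le_mul
          · refine le_trans ?_ (primorial_le_four_pow ξ)
            rw [primorial_eq_prod_primesLE]
            apply Finset.prod_le_prod_of_subset_of_one_le'
            · intro p hp
              simp only [Finset.mem_filter, Nat.mem_primeFactors] at hp
              simp only [Nat.mem_primesLE]
              exact ⟨by omega, hp.1.1⟩
            · intro p hp _
              simp only [Nat.mem_primesLE] at hp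
              exact hp.2.one_le
          · apply Finset.prod_le_prod_of_subset_of_one_le'
            · exact Finset.filter_subset_filter _ hsub
            · intro p hp _
              simp only [Finset.mem_filter, Nat.mem_primeFactors] at hp
              exact hp.1.1.one_le
  calc n = b^2 * a := hab.symm
    _ ≤ ξ^2 * (4^ξ * ∏ r ∈ n.primeFactors.filter (fun r => ξ < r), r) :=
        Nat.mul_le_mul (Nat.pow_le_pow_left hbξ 2) h2
    _ = _ := by ring

theorem good_e (n ξ : ℕ) (hξ : 2 ≤ ξ) (hn : 1 ≤ n) (hsq : ∀ r, ξ < r → ¬ r^2 ∣ n)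
    (T : Finset ℕ) (hT : T ⊆ n.primeFactors.filter (fun r => ξ < r)) :
    (∏ r ∈ T, r) ∣ n ∧ Nat.Coprime (∏ r ∈ T, r) (n / ∏ r ∈ T, r) ∧ Squarefree (∏ r ∈ T, r) ∧
      ¬ 2 ∣ ∏ r ∈ T, r := by
  have hT' : ∀ r ∈ T, r.Prime ∧ r ∣ n ∧ ξ < r := by
    intro r hr
    have := hT hr
    simp only [Finset.mem_filter, Nat.mem_primeFactors] at this
    exact ⟨this.1.1, this.1.2.1, this.2⟩
  have hd : (∏ r ∈ T, r) ∣ n :=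
    Finset.prod_primes_dvd n (fun r hr => (hT' r hr).1.prime) (fun r hr => (hT' r hr).2.1)
  refine ⟨hd, ?_, ?_, ?_⟩
  · apply Nat.Coprime.prod_left
    intro r hr
    rw [(hT' r hr).1.coprime_iff_not_dvd]
    rintro ⟨c, hc⟩
    apply hsq r (hT' r hr).2.2
    obtain ⟨d, hd'⟩ := Finset.dvd_prod_of_mem (fun r => r) hr
    have h := Nat.mul_div_cancel' hd
    rw [hc] at h
    refine ⟨d * c, ?_⟩
    rw [← h]
    rw [hd']; ring
  · refine Finset.squarefree_prod_of_pairwise_isCoprime (fun p hp q hq hpq ↦ ?_)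
      fun p hp ↦ (hT' p hp).1.prime.squarefree
    simp only [Function.onFun, ← Nat.coprime_iff_isRelPrime]
    exact (Nat.coprime_primes (hT' p hp).1 (hT' q hq).1).mpr hpq
  · intro h2
    rw [Nat.prime_two.prime.dvd_finsetProd_iff] at h2
    obtain ⟨r, hr, h2⟩ := h2
    have := (Nat.prime_dvd_prime_iff_eq Nat.prime_two (hT' r hr).1).1 h2
    have := (hT' r hr).2.2
    omega

theorem find_e (n ξ : ℕ) (V z : ℝ) (hξ : 2 ≤ ξ) (hn : 1 ≤ n) (hsq : ∀ r, ξ < r → ¬ r^2 ∣ n)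
    (hV : 1 < V) (hbig : V * ((ξ:ℝ)^2 * 4^ξ) ≤ n)
    (hlt : ∀ P : ℕ, P.Prime → P ∣ n → (P:ℝ) < V)
    (hno : ¬ ∃ Q R : ℕ, Q < R ∧ Q.Prime ∧ R.Prime ∧ Q ∣ n ∧ R ∣ n ∧ z < Q) :
    ∃ e, e ∣ n ∧ Nat.Coprime e (n/e) ∧ Squarefree e ∧ ¬ 2 ∣ e ∧ V ≤ (e:ℝ) ∧ (e:ℝ) ≤ V * z := by
  set S := n.primeFactors.filter (fun r => ξ < r) with hS
  have hSm : ∀ r ∈ S, r.Prime ∧ r ∣ n := by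
    intro r hr
    simp only [hS, Finset.mem_filter, Nat.mem_primeFactors] at hr
    exact ⟨hr.1.1, hr.1.2.1⟩
  have hξ0 : (0:ℝ) < (ξ:ℝ)^2 * 4^ξ := by
    have : (0:ℝ) < ξ := by exact_mod_cast (by omega : 0 < ξ)
    positivity
  have hprod : V ≤ ∏ r ∈ S, (r:ℝ) := by
    have h1 := le_prod_large n ξ hn hsq
    have h2 : (n:ℝ) ≤ (ξ:ℝ)^2 * 4^ξ * ∏ r ∈ S, (r:ℝ) := by
      have h4 : (n:ℝ) ≤ ((ξ^2 * 4^ξ * ∏ r ∈ S, r : ℕ) : ℝ) := Nat.cast_le.2 h1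
      rwa [Nat.cast_mul, Nat.cast_mul, Nat.cast_pow, Nat.cast_pow, Nat.cast_prod] at h4
    have h3 : ((ξ:ℝ)^2 * 4^ξ) * V ≤ ((ξ:ℝ)^2 * 4^ξ) * ∏ r ∈ S, (r:ℝ) := by linarith
    exact le_of_mul_le_mul_left h3 hξ0
  suffices H : ∃ T ⊆ S, V ≤ ∏ r ∈ T, (r:ℝ) ∧ ∏ r ∈ T, (r:ℝ) ≤ V * z by
    obtain ⟨T, hT, h1, h2⟩ := H
    obtain ⟨g1, g2, g3, g4⟩ := good_e n ξ hξ hn hsq T hT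
    exact ⟨_, g1, g2, g3, g4, by rw [Nat.cast_prod]; exact h1, by rw [Nat.cast_prod]; exact h2⟩
  by_cases hall : ∀ r ∈ S, (r:ℝ) ≤ z
  · obtain ⟨T, hT, h1, h2⟩ := greedy S V z 1 (by simpa using hV) hall (by simpa using hprod)
    exact ⟨T, hT, by simpa using h1, by simpa using h2⟩
  · push Not at hall
    obtain ⟨P, hP, hPz⟩ := hall
    have hrest : ∀ r ∈ S.erase P, (r:ℝ) ≤ z := by
      intro r hr
      rw [Finset.mem_erase] at hr
      by_contra hc
      push Not at hc
      apply hno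
      rcases lt_or_gt_of_ne hr.1 with h | h
      · exact ⟨r, P, h, (hSm r hr.2).1, (hSm P hP).1, (hSm r hr.2).2, (hSm P hP).2, hc⟩
      · exact ⟨P, r, h, (hSm P hP).1, (hSm r hr.2).1, (hSm P hP).2, (hSm r hr.2).2, hPz⟩
    obtain ⟨T, hT, h1, h2⟩ := greedy (S.erase P) V z P (hlt P (hSm P hP).1 (hSm P hP).2) hrest (by
      rw [Finset.mul_prod_erase S (fun r => (r:ℝ)) hP]; exact hprod)
    have hPT : P ∉ T := fun h => by simpa using hT h
    refine ⟨insert P T, ?_, ?_, ?_⟩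
    · exact Finset.insert_subset hP (hT.trans (Finset.erase_subset _ _))
    · rw [Finset.prod_insert hPT]; exact h1
    · rw [Finset.prod_insert hPT]; exact h2


theorem p_sq_le (n p N : ℕ) (hn2 : 2 ≤ n) (hnN : n ≤ N) (hd : p^4 ∣ s n) : p^2 ≤ N := by
  have h1 : 0 < s n := by
    unfold s; have := sigma1_gt n hn2; omega
  have h2 := Nat.le_of_dvd h1 hd
  have h3 : s n ≤ sigma1 n := Nat.sub_le _ _
  have h4 := sigma1_le n (by omega)
  have hn0 : (0:ℝ) < n := by exact_mod_cast (by omega : 0 < n)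
  have h5 := Real.log_le_sub_one_of_pos hn0
  have h6 : (sigma1 n : ℝ) ≤ (n:ℝ)^2 := by nlinarith
  have h7 : sigma1 n ≤ n^2 := by exact_mod_cast h6
  have h8 : (p^2)^2 ≤ N^2 := by
    calc (p^2)^2 = p^4 := by ring
      _ ≤ n^2 := by omega
      _ ≤ N^2 := Nat.pow_le_pow_left hnN 2
  exact (Nat.pow_le_pow_iff_left (by norm_num)).1 h8

theorem classify (N ξ n p : ℕ) (ε δ κ η : ℝ) (hε : 0 < ε) (hδ : 0 < δ) (hκ0 : 0 < κ) (hκ1 : κ ≤ 1)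
    (hη0 : 0 < η) (hη1 : η ≤ 1/10) (hηκ : η ≤ κ/8) (hξ : 2 ≤ ξ) (hn1 : 1 ≤ n) (hnN : n ≤ N)
    (h0 : ε * N < n) (h1 : ∀ r, ξ < r → ¬ r^2 ∣ n)
    (h2 : ∃ P Q : ℕ, P ≠ Q ∧ P.Prime ∧ Q.Prime ∧ P ∣ n ∧ Q ∣ n ∧
      (N:ℝ)^δ ≤ P ∧ (N:ℝ)^δ ≤ Q)
    (h3 : ¬ ∃ Q R : ℕ, Q < R ∧ Q.Prime ∧ R.Prime ∧ Q ∣ n ∧ R ∣ n ∧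
      (N:ℝ)^(δ/2) ≤ Q ∧ (R:ℝ) ≤ (Q:ℝ)^(1+κ))
    (hp : p.Prime) (hξp : ξ < p) (hpN : p^2 ≤ N) (hNξ : (ξ:ℝ) < (N:ℝ)^δ)
    (hbig : (N:ℝ)^(3/4:ℝ) * ((ξ:ℝ)^2*4^ξ) ≤ ε * N) :
    (∃ P, P.Prime ∧ P ∣ n ∧ ¬ P^2 ∣ n ∧ (N:ℝ)^δ ≤ P ∧ (P:ℝ) ≤ N ∧ p ∣ n / P) ∨
    (∃ P, P.Prime ∧ P ∣ n ∧ ¬ P^2 ∣ n ∧ (p:ℝ)^(1+η) ≤ P ∧ (P:ℝ) ≤ N ∧ 1 ∣ n / P) ∨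
    (¬ p ∣ n ∧ ∃ e, e ∣ n ∧ Nat.Coprime e (n/e) ∧ Squarefree e ∧ ¬ 2 ∣ e ∧ (p:ℝ)^(1+η) ≤ e ∧
      (e:ℝ) ≤ (p:ℝ)^(2-2*η)) := by
  have hp1 : (1:ℝ) < p := by exact_mod_cast hp.one_lt
  have hp0 : (0:ℝ) < p := by linarith
  have hN1 : (1:ℝ) ≤ N := by exact_mod_cast (by omega : 1 ≤ N)
  have hPN : ∀ P : ℕ, P ∣ n → (P:ℝ) ≤ N := fun P h => by
    exact_mod_cast (Nat.le_of_dvd hn1 h).trans hnN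
  have hξlt : ∀ P : ℕ, (N:ℝ)^δ ≤ P → ξ < P := fun P h => by
    exact_mod_cast hNξ.trans_le h
  by_cases hpn : p ∣ n
  · left
    have key : ∀ P : ℕ, P ≠ p → P.Prime → P ∣ n → (N:ℝ)^δ ≤ P →
        (∃ P, P.Prime ∧ P ∣ n ∧ ¬ P^2 ∣ n ∧ (N:ℝ)^δ ≤ P ∧ (P:ℝ) ≤ N ∧ p ∣ n / P) := by
      intro P hne hP hPn hPδ
      refine ⟨P, hP, hPn, h1 P (hξlt P hPδ), hPδ, hPN P hPn, ?_⟩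
      apply Nat.dvd_div_of_mul_dvd
      exact Nat.Coprime.mul_dvd_of_dvd_of_dvd ((Nat.coprime_primes hP hp).2 hne) hPn hpn
    obtain ⟨P, Q, hPQ, hP, hQ, hPn, hQn, hPδ, hQδ⟩ := h2
    by_cases h : P = p
    · exact key Q (fun h' => hPQ (h.trans h'.symm)) hQ hQn hQδ
    · exact key P h hP hPn hPδ
  right
  by_cases hbigP : ∃ P : ℕ, P.Prime ∧ P ∣ n ∧ (p:ℝ)^(1+η) ≤ P
  · left
    obtain ⟨P, hP, hPn, hPp⟩ := hbigP
    refine ⟨P, hP, hPn, h1 P ?_, hPp, hPN P hPn, one_dvd _⟩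
    have h4 : (p:ℝ) ≤ P := by
      refine le_trans ?_ hPp
      calc (p:ℝ) = (p:ℝ)^(1:ℝ) := (Real.rpow_one _).symm
        _ ≤ _ := Real.rpow_le_rpow_of_exponent_le hp1.le (by linarith)
    exact hξp.trans_le (by exact_mod_cast h4)
  right
  push Not at hbigP
  refine ⟨hpn, ?_⟩
  have hmul : (p:ℝ)^(1+η) * (p:ℝ)^(1-3*η) = (p:ℝ)^(2-2*η) := by
    rw [← Real.rpow_add hp0]; ring_nf
  rw [← hmul]
  apply find_e n ξ _ _ hξ hn1 h1 (Real.one_lt_rpow hp1 (by linarith)) _ hbigP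
  · rintro ⟨Q, R, hQR, hQ, hR, hQn, hRn, hzQ⟩
    apply h3
    refine ⟨Q, R, hQR, hQ, hR, hQn, hRn, ?_, ?_⟩
    · obtain ⟨P, -, -, hP, -, hPn, -, hPδ, -⟩ := h2
      have h4 : (N:ℝ)^δ ≤ (p:ℝ)^(1+η) := hPδ.trans (hbigP P hP hPn).le
      calc (N:ℝ)^(δ/2) = ((N:ℝ)^δ)^(1/2:ℝ) := by
            rw [← Real.rpow_mul (by linarith)]; ring_nf
        _ ≤ ((p:ℝ)^(1+η))^(1/2:ℝ) := Real.rpow_le_rpow (by positivity) h4 (by norm_num)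
        _ = (p:ℝ)^((1+η)*(1/2)) := by rw [← Real.rpow_mul hp0.le]
        _ ≤ (p:ℝ)^(1-3*η) := Real.rpow_le_rpow_of_exponent_le hp1.le (by linarith)
        _ ≤ Q := hzQ.le
    · calc (R:ℝ) ≤ (p:ℝ)^(1+η) := (hbigP R hR hRn).le
        _ ≤ (p:ℝ)^((1-3*η)*(1+κ)) := Real.rpow_le_rpow_of_exponent_le hp1.le (by nlinarith)
        _ = ((p:ℝ)^(1-3*η))^(1+κ) := by rw [Real.rpow_mul hp0.le]
        _ ≤ (Q:ℝ)^(1+κ) := Real.rpow_le_rpow (by positivity) hzQ.le (by linarith)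
  · have h5 : (p:ℝ)^(1+η) ≤ (N:ℝ)^(3/4:ℝ) := by
      calc (p:ℝ)^(1+η) = ((p:ℝ)^(2:ℝ))^((1+η)/2) := by
            rw [← Real.rpow_mul hp0.le]; ring_nf
        _ ≤ (N:ℝ)^((1+η)/2) := by
            apply Real.rpow_le_rpow (by positivity) _ (by linarith)
            rw [Real.rpow_two]; exact_mod_cast hpN
        _ ≤ _ := Real.rpow_le_rpow_of_exponent_le hN1 (by linarith)
    calc _ ≤ (N:ℝ)^(3/4:ℝ) * ((ξ:ℝ)^2*4^ξ) := by gcongr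
      _ ≤ ε * N := hbig
      _ ≤ n := h0.le

noncomputable def F1 (N p : ℕ) : Finset ℕ := (Finset.Icc 1 N).filter (fun n => p^4 ∣ s n ∧ ¬ p^2 ∣ n ∧
  ∃ P : ℕ, P.Prime ∧ P ∣ n ∧ ¬ P^2 ∣ n ∧ (p:ℝ)^2 ≤ P ∧ (P:ℝ) ≤ Real.exp (Real.sqrt p) ∧ 1 ∣ n / P)

noncomputable def F2 (N p : ℕ) (δ : ℝ) : Finset ℕ := (Finset.Icc 1 N).filter (fun n => p^4 ∣ s n ∧ ¬ p^2 ∣ n ∧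
  ∃ P : ℕ, P.Prime ∧ P ∣ n ∧ ¬ P^2 ∣ n ∧ (N:ℝ)^δ ≤ P ∧ (P:ℝ) ≤ N ∧ p ∣ n / P)

noncomputable def F3 (N p : ℕ) (η : ℝ) : Finset ℕ := (Finset.Icc 1 N).filter (fun n => p^4 ∣ s n ∧ ¬ p^2 ∣ n ∧
  ∃ P : ℕ, P.Prime ∧ P ∣ n ∧ ¬ P^2 ∣ n ∧ (p:ℝ)^(1+η) ≤ P ∧ (P:ℝ) ≤ N ∧ 1 ∣ n / P)

noncomputable def F4 (N p : ℕ) (η : ℝ) : Finset ℕ := (Finset.Icc 1 N).filter (fun n => p^4 ∣ s n ∧ ¬ p ∣ n ∧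
  ∃ e, e ∣ n ∧ Nat.Coprime e (n/e) ∧ Squarefree e ∧ ¬ 2 ∣ e ∧ (p:ℝ)^(1+η) ≤ e ∧
      (e:ℝ) ≤ (p:ℝ)^(2-2*η))

theorem cntF1 (N p : ℕ) (hp : p.Prime) : ((F1 N p).card : ℝ) ≤ 3 * N * ((p:ℝ)^2)⁻¹ := by
  have hp1 : (1:ℝ) < p := by exact_mod_cast hp.one_lt
  have hp0 : (0:ℝ) < p := by linarith
  have h := lemA N p 1 hp le_rfl ((p:ℝ)^2) (Real.exp (Real.sqrt p)) (by positivity)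
    (Real.one_le_exp (Real.sqrt_nonneg _)) (F1 N p) (by
      intro n hn
      simp only [F1, Finset.mem_filter, Finset.mem_Icc] at hn
      obtain ⟨⟨a, b⟩, c, d, e⟩ := hn
      exact ⟨a, b, c, d, e⟩)
  refine h.trans ?_
  rw [Real.log_exp]
  have hs : Real.sqrt p ≤ p := by
    rw [Real.sqrt_le_left hp0.le]; nlinarith
  have hN : (0:ℝ) ≤ N := by positivity
  calc _ ≤ (N:ℝ)/((1:ℕ)*(p:ℝ)^2) + N/((1:ℕ)*(p:ℝ)^3)*(2*p) := by gcongr; linarith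
    _ = _ := by push_cast; field_simp; ring

theorem cntF2 (N p : ℕ) (δ η : ℝ) (hp : p.Prime) (hN : 1 ≤ N) (hpN : p ≤ N) (hη : 0 < η)
    (hη1 : η ≤ 1) (hδ : η ≤ δ) (hlog : Real.log N < p) :
    ((F2 N p δ).card : ℝ) ≤ 3 * N * (1 / (p:ℝ)^(1+η)) := by
  have hp1 : (1:ℝ) < p := by exact_mod_cast hp.one_lt
  have hp0 : (0:ℝ) < p := by linarith
  have hN1 : (1:ℝ) ≤ N := by exact_mod_cast hN
  have hpNr : (p:ℝ) ≤ N := by exact_mod_cast hpN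
  have h := lemA N p p hp hp.one_le ((N:ℝ)^δ) N (by positivity) hN1 (F2 N p δ) (by
      intro n hn
      simp only [F2, Finset.mem_filter, Finset.mem_Icc] at hn
      obtain ⟨⟨a, b⟩, c, d, e⟩ := hn
      exact ⟨a, b, c, d, e⟩)
  refine h.trans ?_
  have e1 : (p:ℝ)^(1+η) ≤ p * (N:ℝ)^δ := by
    rw [Real.rpow_add hp0, Real.rpow_one]
    have : (p:ℝ)^η ≤ (N:ℝ)^δ := (Real.rpow_le_rpow hp0.le hpNr hη.le).trans
      (Real.rpow_le_rpow_of_exponent_le hN1 hδ)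
    gcongr
  have e2 : (p:ℝ)^(1+η) ≤ (p:ℝ)^3 := by
    rw [← Real.rpow_natCast]
    exact Real.rpow_le_rpow_of_exponent_le hp1.le (by push_cast; linarith)
  calc _ ≤ (N:ℝ)/(p*(N:ℝ)^δ) + N/(p*(p:ℝ)^3)*(2*p) := by gcongr; linarith
    _ = (N:ℝ)/(p*(N:ℝ)^δ) + 2*N/((p:ℝ)^3) := by field_simp
    _ ≤ (N:ℝ)/((p:ℝ)^(1+η)) + 2*N/((p:ℝ)^(1+η)) := by gcongr
    _ = _ := by ring

theorem cntF3 (N p : ℕ) (η : ℝ) (hp : p.Prime) (hN : 1 ≤ N) (hη : 0 < η)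
    (hη1 : η ≤ 1) (hlog : Real.log N < p) :
    ((F3 N p η).card : ℝ) ≤ 3 * N * (1 / (p:ℝ)^(1+η)) := by
  have hp1 : (1:ℝ) < p := by exact_mod_cast hp.one_lt
  have hp0 : (0:ℝ) < p := by linarith
  have hN1 : (1:ℝ) ≤ N := by exact_mod_cast hN
  have h := lemA N p 1 hp le_rfl ((p:ℝ)^(1+η)) N (by positivity) hN1 (F3 N p η) (by
      intro n hn
      simp only [F3, Finset.mem_filter, Finset.mem_Icc] at hn
      obtain ⟨⟨a, b⟩, c, d, e⟩ := hn
      exact ⟨a, b, c, d, e⟩)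
  refine h.trans ?_
  have e2 : (p:ℝ)^(1+η) ≤ (p:ℝ)^2 := by
    rw [← Real.rpow_natCast]
    exact Real.rpow_le_rpow_of_exponent_le hp1.le (by push_cast; linarith)
  calc _ ≤ (N:ℝ)/((1:ℕ)*(p:ℝ)^(1+η)) + N/((1:ℕ)*(p:ℝ)^3)*(2*p) := by gcongr; linarith
    _ = (N:ℝ)/((p:ℝ)^(1+η)) + 2*N/((p:ℝ)^2) := by push_cast; field_simp
    _ ≤ (N:ℝ)/((p:ℝ)^(1+η)) + 2*N/((p:ℝ)^(1+η)) := by gcongr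
    _ = _ := by ring

theorem cntF4 (N p : ℕ) (η : ℝ) (hp : p.Prime) (hη : 0 < η)
    (hlog : 1 + 2 * Real.log p < (p:ℝ)^(4*η)) :
    ((F4 N p η).card : ℝ) ≤ N * (1 / (p:ℝ)^(1+η)) := by
  have hp1 : (1:ℝ) < p := by exact_mod_cast hp.one_lt
  have hp0 : (0:ℝ) < p := by linarith
  have h := lemB N p hp ((p:ℝ)^(1+η)) ((p:ℝ)^(2-2*η)) (by positivity) (by
      rw [Real.log_rpow hp0, ← Real.rpow_add hp0]
      have hl : 0 < Real.log p := Real.log_pos hp1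
      calc _ < (p:ℝ)^(2-2*η+(2-2*η)) * (p:ℝ)^(4*η) := by
            apply mul_lt_mul_of_pos_left _ (by positivity)
            nlinarith
        _ = (p:ℝ)^4 := by
            rw [← Real.rpow_add hp0, ← Real.rpow_natCast]; push_cast; ring_nf) (F4 N p η) (by
      intro n hn
      simp only [F4, Finset.mem_filter, Finset.mem_Icc] at hn
      obtain ⟨⟨a, b⟩, c, d, e⟩ := hn
      exact ⟨a, b, c, d, e⟩)
  refine h.trans (le_of_eq (by ring))


theorem core (ε : ℝ) (hε : 0 < ε) : ∃ ξ : ℕ, 2 ≤ ξ ∧ ∀ᶠ N : ℕ in atTop,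
    (((Finset.Icc 1 N).filter (fun n => ∃ p : ℕ, p.Prime ∧ ξ < p ∧ p^4 ∣ s n)).card : ℝ)
      ≤ 15 * ε * N := by
  obtain ⟨δ, hδ0, hδ1, hE2'⟩ := cntE2' ε hε
  obtain ⟨κ, hκ0, hκ1, hE3⟩ := cntE3 (δ/2) ε (by positivity) hε
  obtain ⟨ξ0, hE2⟩ := cntE2 ε hε
  obtain ⟨m, hm⟩ := exists_nat_ge (2/ε)
  set η := min (κ/8) (min δ (1/10)) with hη
  have hη0 : 0 < η := by positivity
  have hηκ : η ≤ κ/8 := min_le_left _ _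
  have hηδ : η ≤ δ := (min_le_right _ _).trans (min_le_left _ _)
  have hη1 : η ≤ 1/10 := (min_le_right _ _).trans (min_le_right _ _)
  set ξ := max 2 (max ξ0 m) with hξd
  have hξ2 : 2 ≤ ξ := le_max_left _ _
  have hξ0 : ξ0 ≤ ξ := (le_max_left _ _).trans (le_max_right _ _)
  have hξm : m ≤ ξ := (le_max_right _ _).trans (le_max_right _ _)
  have hξε : 2 / ((ξ:ℝ)+1) ≤ ε := by
    have : (m:ℝ) ≤ ξ := by exact_mod_cast hξm
    rw [div_le_iff₀ hε] at hm
    rw [div_le_iff₀ (by positivity)]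
    nlinarith
  clear_value ξ η
  refine ⟨ξ, hξ2, ?_⟩
  have Tc : Tendsto (fun N : ℕ => (N:ℝ)) atTop atTop := tendsto_natCast_atTop_atTop
  have T2 : Tendsto (fun N : ℕ => Real.log N) atTop atTop := Real.tendsto_log_atTop.comp Tc
  have T3 : Tendsto (fun N : ℕ => ⌊Real.log N⌋₊) atTop atTop := tendsto_nat_floor_atTop.comp T2
  have Tδ : Tendsto (fun N : ℕ => (N:ℝ)^δ) atTop atTop := (tendsto_rpow_atTop hδ0).comp Tc
  have T4 : Tendsto (fun N : ℕ => (N:ℝ)^(1/4:ℝ)) atTop atTop :=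
    (tendsto_rpow_atTop (by norm_num)).comp Tc
  -- log vs power
  have hlog : ∀ᶠ p : ℕ in atTop, 1 + 2 * Real.log p < (p:ℝ)^(4*η) := by
    have h1 : (fun x : ℝ => Real.log x) =o[atTop] fun x => x^(4*η) :=
      isLittleO_log_rpow_atTop (by positivity)
    have h2 := Tc.eventually (h1.bound (show (0:ℝ) < 1/4 by norm_num))
    have h3 : Tendsto (fun N : ℕ => (N:ℝ)^(4*η)) atTop atTop :=
      (tendsto_rpow_atTop (by positivity)).comp Tc
    filter_upwards [h2, h3.eventually_ge_atTop 3] with p h4 h5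
    rw [Real.norm_eq_abs, Real.norm_eq_abs, abs_of_nonneg (a := (p:ℝ)^(4*η)) (by positivity)] at h4
    have := (le_abs_self _).trans h4
    linarith
  obtain ⟨p0, hp0⟩ := eventually_atTop.1 hlog
  filter_upwards [hE2', hE3, T3.eventually (tail η ε hη0 hε), T3.eventually_ge_atTop p0,
    Tδ.eventually_gt_atTop (ξ:ℝ), T4.eventually_ge_atTop (((ξ:ℝ)^2*4^ξ)/ε),
    Tc.eventually_ge_atTop (1/ε), eventually_ge_atTop 2] with N hE2' hE3 htail hM hNξ hN4 hNε hN2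
  have hNr : (2:ℝ) ≤ N := by exact_mod_cast hN2
  have hNp : (0:ℝ) < N := by linarith
  have hbig : (N:ℝ)^(3/4:ℝ) * ((ξ:ℝ)^2*4^ξ) ≤ ε * N := by
    rw [div_le_iff₀ hε] at hN4
    have : (N:ℝ) = (N:ℝ)^(3/4:ℝ) * (N:ℝ)^(1/4:ℝ) := by
      rw [← Real.rpow_add hNp]; norm_num
    calc _ ≤ (N:ℝ)^(3/4:ℝ) * ((N:ℝ)^(1/4:ℝ) * ε) := by gcongr
      _ = ε * ((N:ℝ)^(3/4:ℝ) * (N:ℝ)^(1/4:ℝ)) := by ring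
      _ = ε * N := by rw [← this]
  set A0 := Finset.Icc 1 ⌊ε * N⌋₊ with hA0
  set A1 := (Finset.Icc 1 N).filter (fun n => ∃ r, ξ < r ∧ r^2 ∣ n) with hA1
  set A2 := (Finset.Icc 1 N).filter (fun n => ∃ p : ℕ, ξ < p ∧ (p:ℝ) ≤ Real.log N ∧
      ∀ P : ℕ, P.Prime → P ∣ n → (p:ℝ)^2 ≤ P → ¬ (P:ℝ) ≤ Real.exp (Real.sqrt p)) with hA2
  set A3 := (Finset.Icc 1 N).filter (fun n => ¬ ∃ P Q : ℕ, P ≠ Q ∧ P.Prime ∧ Q.Prime ∧ P ∣ n ∧ Q ∣ n ∧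
      (N:ℝ)^δ ≤ P ∧ (N:ℝ)^δ ≤ Q) with hA3
  set A4 := (Finset.Icc 1 N).filter (fun n => ∃ Q R : ℕ, Q < R ∧ Q.Prime ∧ R.Prime ∧ Q ∣ n ∧ R ∣ n ∧
      (N:ℝ)^(δ/2) ≤ Q ∧ (R:ℝ) ≤ (Q:ℝ)^(1+κ)) with hA4
  set J1 := (Finset.Ioo ξ (N+1)).filter Nat.Prime with hJ1
  set J2 := (Finset.Ioc ⌊Real.log N⌋₊ N).filter Nat.Prime with hJ2
  set A5 := J1.biUnion (fun p => F1 N p) with hA5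
  set A6 := J2.biUnion (fun p => F2 N p δ ∪ (F3 N p η ∪ F4 N p η)) with hA6
  have c0 : (A0.card : ℝ) ≤ ε * N := by
    rw [hA0, Nat.card_Icc, Nat.add_sub_cancel]
    exact Nat.floor_le (by positivity)
  have c1 : (A1.card : ℝ) ≤ ε * N := by
    refine (cntE1 N ξ).trans ?_
    rw [mul_comm ε]
    exact mul_le_mul_of_nonneg_left hξε hNp.le
  have c2 : (A2.card : ℝ) ≤ ε * N := hE2 ξ hξ0 N
  have c5 : (A5.card : ℝ) ≤ 3 * ε * N := by
    have h1 : (A5.card : ℝ) ≤ ∑ p ∈ J1, ((F1 N p).card : ℝ) := by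
      exact_mod_cast (Finset.card_biUnion_le : A5.card ≤ _)
    refine h1.trans ?_
    calc _ ≤ ∑ p ∈ J1, 3 * (N:ℝ) * ((p:ℝ)^2)⁻¹ := by
          apply Finset.sum_le_sum; intro p hp
          exact cntF1 N p (Finset.mem_filter.1 hp).2
      _ ≤ ∑ p ∈ Finset.Ioo ξ (N+1), 3 * (N:ℝ) * ((p:ℝ)^2)⁻¹ := by
          apply Finset.sum_le_sum_of_subset_of_nonneg (Finset.filter_subset _ _)
          intros; positivity
      _ = 3 * (N:ℝ) * ∑ p ∈ Finset.Ioo ξ (N+1), ((p:ℝ)^2)⁻¹ := by rw [Finset.mul_sum]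
      _ ≤ 3 * (N:ℝ) * (2/((ξ:ℝ)+1)) := by
          apply mul_le_mul_of_nonneg_left _ (by positivity)
          exact sum_Ioo_inv_sq_le (α := ℝ) ξ (N+1)
      _ ≤ 3 * (N:ℝ) * ε := by gcongr
      _ = _ := by ring
  have c6 : (A6.card : ℝ) ≤ 7 * ε * N := by
    have h1 : (A6.card : ℝ) ≤ ∑ p ∈ J2, ((F2 N p δ ∪ (F3 N p η ∪ F4 N p η)).card : ℝ) := by
      exact_mod_cast (Finset.card_biUnion_le : A6.card ≤ _)
    refine h1.trans ?_
    calc _ ≤ ∑ p ∈ J2, 7 * (N:ℝ) * (1/(p:ℝ)^(1+η)) := by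
          apply Finset.sum_le_sum; intro p hp
          simp only [hJ2, Finset.mem_filter, Finset.mem_Ioc] at hp
          have hl : Real.log N < p := by
            rw [← Nat.floor_lt (Real.log_nonneg (by linarith))]; exact hp.1.1
          have a2 := cntF2 N p δ η hp.2 (by omega) hp.1.2 hη0 (by linarith) hηδ hl
          have a3 := cntF3 N p η hp.2 (by omega) hη0 (by linarith) hl
          have a4 := cntF4 N p η hp.2 hη0 (hp0 p (by omega))
          have b1 : ((F2 N p δ ∪ (F3 N p η ∪ F4 N p η)).card : ℝ) ≤
              (F2 N p δ).card + ((F3 N p η).card + (F4 N p η).card) := by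
            have := (Finset.card_union_le (F2 N p δ) (F3 N p η ∪ F4 N p η)).trans
              (Nat.add_le_add_left (Finset.card_union_le (F3 N p η) (F4 N p η)) _)
            exact_mod_cast this
          linarith
      _ = 7 * (N:ℝ) * ∑ p ∈ J2, (1/(p:ℝ)^(1+η)) := by rw [Finset.mul_sum]
      _ ≤ 7 * (N:ℝ) * ε := by
          apply mul_le_mul_of_nonneg_left _ (by positivity)
          apply htail
          intro p hp
          simp only [hJ2, Finset.mem_filter, Finset.mem_Ioc] at hp
          exact hp.1.1
      _ = _ := by ring
  have hsub : (Finset.Icc 1 N).filter (fun n => ∃ p : ℕ, p.Prime ∧ ξ < p ∧ p^4 ∣ s n) ⊆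
      A0 ∪ (A1 ∪ (A2 ∪ (A3 ∪ (A4 ∪ (A5 ∪ A6))))) := by
    intro n hn
    rw [Finset.mem_filter] at hn
    obtain ⟨hnI, p, hp, hξp, hd⟩ := hn
    obtain ⟨hn1, hnN⟩ := Finset.mem_Icc.1 hnI
    by_contra hc
    simp only [Finset.mem_union, not_or] at hc
    obtain ⟨g0, g1, g2, g3, g4, g5, g6⟩ := hc
    have k0 : ε * N < n := by
      by_contra h
      push Not at h
      exact g0 (Finset.mem_Icc.2 ⟨hn1, Nat.le_floor h⟩)
    have k1 : ∀ r, ξ < r → ¬ r^2 ∣ n := fun r hr hrd =>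
      g1 (Finset.mem_filter.2 ⟨hnI, r, hr, hrd⟩)
    have hn2 : 2 ≤ n := by
      have h1 : 1 ≤ ε * N := by rw [div_le_iff₀ hε] at hNε; linarith
      have h2 : (1:ℝ) < n := by linarith
      exact_mod_cast h2
    have hpsq := p_sq_le n p N hn2 hnN hd
    have hpN : p ≤ N := (Nat.le_self_pow (by norm_num) p).trans hpsq
    have hpn := k1 p hξp
    by_cases hl : (p:ℝ) ≤ Real.log N
    · apply g5
      rw [hA5, Finset.mem_biUnion]
      refine ⟨p, Finset.mem_filter.2 ⟨Finset.mem_Ioo.2 ⟨hξp, by omega⟩, hp⟩, ?_⟩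
      by_contra hF
      apply g2
      refine Finset.mem_filter.2 ⟨hnI, p, hξp, hl, ?_⟩
      intro P hP hPn hPp hPe
      apply hF
      refine Finset.mem_filter.2 ⟨hnI, hd, hpn, P, hP, hPn, k1 P ?_, hPp, hPe, one_dvd _⟩
      have : p^2 ≤ P := by exact_mod_cast hPp
      exact hξp.trans_le ((Nat.le_self_pow (by norm_num) p).trans this)
    · push Not at hl
      have hpJ : p ∈ J2 := Finset.mem_filter.2 ⟨Finset.mem_Ioc.2
        ⟨by rw [Nat.floor_lt (Real.log_nonneg (by linarith))]; exact hl, hpN⟩, hp⟩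
      apply g6
      rw [hA6, Finset.mem_biUnion]
      refine ⟨p, hpJ, ?_⟩
      have k3 : ∃ P Q : ℕ, P ≠ Q ∧ P.Prime ∧ Q.Prime ∧ P ∣ n ∧ Q ∣ n ∧
          (N:ℝ)^δ ≤ P ∧ (N:ℝ)^δ ≤ Q := by
        by_contra h
        exact g3 (Finset.mem_filter.2 ⟨hnI, h⟩)
      have k4 : ¬ ∃ Q R : ℕ, Q < R ∧ Q.Prime ∧ R.Prime ∧ Q ∣ n ∧ R ∣ n ∧
          (N:ℝ)^(δ/2) ≤ Q ∧ (R:ℝ) ≤ (Q:ℝ)^(1+κ) := fun h =>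
        g4 (Finset.mem_filter.2 ⟨hnI, h⟩)
      simp only [Finset.mem_union]
      rcases classify N ξ n p ε δ κ η hε hδ0 hκ0 hκ1 hη0 hη1 hηκ hξ2 hn1 hnN k0 k1 k3 k4 hp hξp
        hpsq hNξ hbig with h | h | h
      · left; exact Finset.mem_filter.2 ⟨hnI, hd, hpn, h⟩
      · right; left; exact Finset.mem_filter.2 ⟨hnI, hd, hpn, h⟩
      · right; right; exact Finset.mem_filter.2 ⟨hnI, hd, h⟩
  have hcard := Finset.card_le_card hsub
  have u1 := Finset.card_union_le A0 (A1 ∪ (A2 ∪ (A3 ∪ (A4 ∪ (A5 ∪ A6)))))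
  have u2 := Finset.card_union_le A1 (A2 ∪ (A3 ∪ (A4 ∪ (A5 ∪ A6))))
  have u3 := Finset.card_union_le A2 (A3 ∪ (A4 ∪ (A5 ∪ A6)))
  have u4 := Finset.card_union_le A3 (A4 ∪ (A5 ∪ A6))
  have u5 := Finset.card_union_le A4 (A5 ∪ A6)
  have u6 := Finset.card_union_le A5 A6
  have hfin : (((Finset.Icc 1 N).filter (fun n => ∃ p : ℕ, p.Prime ∧ ξ < p ∧ p^4 ∣ s n)).card : ℝ)
      ≤ A0.card + A1.card + A2.card + A3.card + A4.card + A5.card + A6.card := by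
    have : ((Finset.Icc 1 N).filter (fun n => ∃ p : ℕ, p.Prime ∧ ξ < p ∧ p^4 ∣ s n)).card
      ≤ A0.card + A1.card + A2.card + A3.card + A4.card + A5.card + A6.card := by omega
    exact_mod_cast this
  linarith

theorem s_not_div_by_large_prime_powers (k : ℕ) (hk : 4 ≤ k) :
    (fun x : ℝ => (((Finset.Icc 1 ⌊x⌋₊).filter
        (fun n => ∃ p : ℕ, p.Prime ∧
          (Real.log (Real.log x)) ^ (0.9 : ℝ) < ((p ^ k : ℕ) : ℝ) ∧ p ^ k ∣ s n)).card : ℝ))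
      =o[atTop] (fun x : ℝ => x) := by
  rw [Asymptotics.isLittleO_iff]
  intro c hc
  obtain ⟨ξ, hξ2, hξ⟩ := core (c/15) (by positivity)
  have T1 : Tendsto (fun x : ℝ => (Real.log (Real.log x)) ^ (0.9 : ℝ)) atTop atTop :=
    (tendsto_rpow_atTop (by norm_num)).comp
      (Real.tendsto_log_atTop.comp Real.tendsto_log_atTop)
  have T2 : Tendsto (fun x : ℝ => ⌊x⌋₊) atTop atTop := tendsto_nat_floor_atTop
  filter_upwards [T1.eventually_ge_atTop ((ξ:ℝ)^k), T2.eventually hξ, eventually_ge_atTop 0]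
    with x h1 h2 hx
  rw [Real.norm_of_nonneg (by positivity), Real.norm_of_nonneg hx]
  have h3 : ((⌊x⌋₊ : ℕ) : ℝ) ≤ x := Nat.floor_le hx
  have h4 : 15 * (c/15) * ((⌊x⌋₊ : ℕ) : ℝ) ≤ c * x := by
    have : 15 * (c/15) = c := by ring
    rw [this]; gcongr
  refine le_trans ?_ (h2.trans h4)
  norm_cast
  apply Finset.card_le_card
  intro n hn
  rw [Finset.mem_filter] at hn ⊢
  obtain ⟨hnI, p, hp, hpk, hd⟩ := hn
  refine ⟨hnI, p, hp, ?_, (pow_dvd_pow p hk).trans hd⟩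
  have h5 : (ξ:ℝ)^k < ((p^k : ℕ):ℝ) := h1.trans_lt hpk
  have h6 : ξ^k < p^k := by exact_mod_cast h5
  exact lt_of_pow_lt_pow_left₀ k (Nat.zero_le _) h6
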